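/- For every real ν > 0 and every x with 0 < x ≤ 1, J_ν(νx) ≥ (Γ(1/3)/(2^{2/3} 3^{1/6} π (ν + 0.095)^{1/3})) · x^ν · exp(ν²(1−x²)/(4ν+4)). -/

import Mathlib

open MeasureTheory Real

noncomputable section

/-- The Bessel function of the first kind `J_ν`, defined by its power series. -/
def besselJ (v x : ℝ) : ℝ :=
  ∑' k : ℕ, ((-1 : ℝ) ^ k / (Nat.factorial k * Real.Gamma ((k : ℝ) + v + 1))) *
    (x / 2) ^ (2 * (k : ℝ) + v)

/-- The reduced Bessel series. -/
def bPhi (v z : ℝ) : ℝ := ∑' k : ℕ, (-1 : ℝ) ^ k * (z ^ k / (Nat.factorial k * Real.Gamma ((k : ℝ) + v + 1)))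

lemma bgam_pos (v : ℝ) (hv : 0 ≤ v) (k : ℕ) : 0 < Real.Gamma ((k : ℝ) + v + 1) :=
  Real.Gamma_pos_of_pos (by positivity)

lemma bgam_succ (v : ℝ) (hv : 0 ≤ v) (k : ℕ) :
    Real.Gamma (((k + 1 : ℕ) : ℝ) + v + 1) = ((k : ℝ) + v + 1) * Real.Gamma ((k : ℝ) + v + 1) := by
  rw [← Real.Gamma_add_one (by positivity)]
  congr 1; push_cast; ring

lemma bgam_ge (v : ℝ) (hv : 0 ≤ v) (k : ℕ) : Real.Gamma (v + 1) ≤ Real.Gamma ((k : ℝ) + v + 1) := by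
  induction k with
  | zero => simp
  | succ k ih =>
    rw [bgam_succ v hv k]
    have := bgam_pos v hv k
    have hk : (0 : ℝ) ≤ k := by positivity
    nlinarith

lemma bterm_bound (v : ℝ) (hv : 0 ≤ v) (z R : ℝ) (hz : |z| ≤ R) (k : ℕ) :
    ‖(-1 : ℝ) ^ k * (z ^ k / (Nat.factorial k * Real.Gamma ((k : ℝ) + v + 1)))‖
      ≤ R ^ k / Nat.factorial k * (Real.Gamma (v + 1))⁻¹ := by
  have h0 : 0 < Real.Gamma (v + 1) := Real.Gamma_pos_of_pos (by positivity)
  have h1 := bgam_ge v hv k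
  have h2 := bgam_pos v hv k
  rw [norm_mul, norm_pow, norm_neg, norm_one, one_pow, one_mul, norm_div, norm_mul, norm_pow,
    Real.norm_eq_abs, Real.norm_of_nonneg h2.le, Real.norm_of_nonneg (by positivity),
    ← div_div, div_eq_mul_inv _ (Real.Gamma _)]
  have hR : 0 ≤ R := (abs_nonneg z).trans hz
  gcongr

lemma bdterm_bound (v : ℝ) (hv : 0 ≤ v) (z R : ℝ) (hz : |z| ≤ R) (k : ℕ) :
    ‖(-1 : ℝ) ^ k * ((k * z ^ (k - 1)) / (Nat.factorial k * Real.Gamma ((k : ℝ) + v + 1)))‖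
      ≤ R ^ (k - 1) / Nat.factorial (k - 1) * (Real.Gamma (v + 1))⁻¹ := by
  have h0 : 0 < Real.Gamma (v + 1) := Real.Gamma_pos_of_pos (by positivity)
  have hR : 0 ≤ R := (abs_nonneg z).trans hz
  rcases k with _ | k
  · simp
    positivity
  have h1 := bgam_ge v hv (k + 1)
  have h2 := bgam_pos v hv (k + 1)
  have e : ((k + 1 : ℕ) * z ^ (k + 1 - 1)) / (Nat.factorial (k + 1) * Real.Gamma (((k + 1 : ℕ) : ℝ) + v + 1))
      = z ^ k / Nat.factorial k * (Real.Gamma (((k + 1 : ℕ) : ℝ) + v + 1))⁻¹ := by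
    rw [Nat.factorial_succ, Nat.cast_mul, Nat.add_sub_cancel]
    have : ((k + 1 : ℕ) : ℝ) ≠ 0 := by positivity
    field_simp
  rw [e, norm_mul, norm_pow, norm_neg, norm_one, one_pow, one_mul, norm_mul, norm_div, norm_pow,
    Real.norm_eq_abs, Real.norm_of_nonneg (by positivity : (0:ℝ) ≤ (Real.Gamma (((k + 1 : ℕ) : ℝ) + v + 1))⁻¹), Real.norm_of_nonneg (by positivity), Nat.add_sub_cancel]
  gcongr

lemma bsumm (v : ℝ) (hv : 0 ≤ v) (z : ℝ) :
    Summable fun k : ℕ => (-1 : ℝ) ^ k * (z ^ k / (Nat.factorial k * Real.Gamma ((k : ℝ) + v + 1))) :=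
  Summable.of_norm_bounded ((Real.summable_pow_div_factorial |z|).mul_right _)
    (bterm_bound v hv z |z| le_rfl)

lemma bPhi_deriv (v : ℝ) (hv : 0 ≤ v) (z : ℝ) : HasDerivAt (bPhi v) (-bPhi (v + 1) z) z := by
  set R := |z| + 1 with hR
  have hzR : z ∈ Metric.ball (0 : ℝ) R := by simp [hR]
  have hs : Summable fun k : ℕ => R ^ (k - 1) / Nat.factorial (k - 1) * (Real.Gamma (v + 1))⁻¹ := by
    apply Summable.mul_right
    rw [← summable_nat_add_iff 1]
    simpa using Real.summable_pow_div_factorial R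
  have key := hasDerivAt_tsum_of_isPreconnected (𝕜 := ℝ) (u := fun k : ℕ => R ^ (k - 1) / Nat.factorial (k - 1) * (Real.Gamma (v + 1))⁻¹)
    (g := fun (k : ℕ) (z : ℝ) => (-1 : ℝ) ^ k * (z ^ k / (Nat.factorial k * Real.Gamma ((k : ℝ) + v + 1))))
    (g' := fun (k : ℕ) (z : ℝ) => (-1 : ℝ) ^ k * ((k * z ^ (k - 1)) / (Nat.factorial k * Real.Gamma ((k : ℝ) + v + 1))))
    (t := Metric.ball 0 R) (y₀ := 0) (y := z) hs Metric.isOpen_ball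
    (convex_ball 0 R).isPreconnected ?_ ?_ (by simp [hR]; positivity) (bsumm v hv 0) hzR
  · have e0 : -bPhi (v + 1) z = ∑' (n : ℕ), (-1 : ℝ) ^ n * (↑n * z ^ (n - 1) / (↑n.factorial * Gamma (↑n + v + 1))) := ?_
    · rw [e0]; exact key
    rw [Summable.tsum_eq_zero_add]
    · simp only [CharP.cast_eq_zero, zero_mul, zero_div, mul_zero, zero_add]
      unfold bPhi
      rw [← tsum_neg]
      congr 1; ext k
      have h2 := bgam_pos v hv (k + 1)
      have e : Real.Gamma ((k : ℝ) + (v + 1) + 1) = Real.Gamma (((k + 1 : ℕ) : ℝ) + v + 1) := by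
        congr 1; push_cast; ring
      rw [e, Nat.factorial_succ]
      simp only [Nat.add_sub_cancel, Nat.cast_mul]
      have : ((k + 1 : ℕ) : ℝ) ≠ 0 := by positivity
      field_simp
      ring
    · refine Summable.of_norm_bounded (g := fun k : ℕ => R ^ (k - 1) / Nat.factorial (k - 1) * (Real.Gamma (v + 1))⁻¹) hs ?_
      intro k
      exact bdterm_bound v hv z R (by simp [hR]) k
  · intro k y hy
    exact ((hasDerivAt_pow k y).div_const _).const_mul _
  · intro k y hy
    exact bdterm_bound v hv y R (by simpa using (Metric.mem_ball.1 hy).le) k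

lemma bPhi_rec (v : ℝ) (hv : 0 ≤ v) (z : ℝ) :
    bPhi v z = (v + 1) * bPhi (v + 1) z - z * bPhi (v + 2) z := by
  have h1 := (bsumm (v + 1) (by positivity) z)
  have h2 := (bsumm (v + 2) (by positivity) z)
  unfold bPhi
  rw [(bsumm v hv z).tsum_eq_zero_add, h1.tsum_eq_zero_add, mul_add, ← tsum_mul_left, ← tsum_mul_left, add_sub_assoc,
    ← Summable.tsum_sub (((summable_nat_add_iff 1).2 h1).mul_left _) (h2.mul_left _)]
  have hg : 0 < Real.Gamma (v + 1) := Real.Gamma_pos_of_pos (by positivity)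
  congr 1
  · have : Real.Gamma (v + 1 + 1) = (v + 1) * Real.Gamma (v + 1) := Real.Gamma_add_one (by positivity)
    simp [this]
    field_simp
  · congr 1; ext k
    have e1 : Real.Gamma (((k + 1 : ℕ) : ℝ) + (v + 1) + 1) = ((k : ℝ) + v + 2) * Real.Gamma ((k : ℝ) + v + 2) := by
      rw [← Real.Gamma_add_one (by positivity)]
      congr 1; push_cast; ring
    have e2 : Real.Gamma (((k : ℕ) : ℝ) + (v + 2) + 1) = ((k : ℝ) + v + 2) * Real.Gamma ((k : ℝ) + v + 2) := by
      rw [← Real.Gamma_add_one (by positivity)]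
      congr 1; push_cast; ring
    have e3 : Real.Gamma (((k + 1 : ℕ) : ℝ) + v + 1) = Real.Gamma ((k : ℝ) + v + 2) := by
      congr 1; push_cast; ring
    have h3 : 0 < Real.Gamma ((k : ℝ) + v + 2) := Real.Gamma_pos_of_pos (by positivity)
    rw [e1, e2, e3, Nat.factorial_succ]
    push_cast
    have : (k : ℝ) + v + 2 ≠ 0 := by positivity
    field_simp
    ring

lemma bPhi_alt (v : ℝ) (hv : 0 ≤ v) (z : ℝ) (hz : 0 ≤ z) (hzv : z ≤ v + 1) :
    1 - z / (v + 1) ≤ Real.Gamma (v + 1) * bPhi v z ∧ Real.Gamma (v + 1) * bPhi v z ≤ 1 := by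
  have hg : 0 < Real.Gamma (v + 1) := Real.Gamma_pos_of_pos (by positivity)
  have ht := (bsumm v hv z).hasSum.tendsto_sum_nat
  have hanti : Antitone fun k : ℕ => z ^ k / (Nat.factorial k * Real.Gamma ((k : ℝ) + v + 1)) := by
    apply antitone_nat_of_succ_le
    intro k
    rw [bgam_succ v hv k, Nat.factorial_succ]
    have h2 := bgam_pos v hv k
    rw [div_le_div_iff₀ (by positivity) (by positivity)]
    push_cast
    have hz2 : z ≤ (k + 1) * (k + v + 1) := by
      have : (0 : ℝ) ≤ k := by positivity
      nlinarith [mul_nonneg this this, mul_nonneg this hv]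
    have : 0 ≤ z ^ k * (Nat.factorial k * Real.Gamma ((k : ℝ) + v + 1)) := by positivity
    calc z ^ (k + 1) * (Nat.factorial k * Real.Gamma ((k : ℝ) + v + 1))
        = z ^ k * (Nat.factorial k * Real.Gamma ((k : ℝ) + v + 1)) * z := by ring
      _ ≤ z ^ k * (Nat.factorial k * Real.Gamma ((k : ℝ) + v + 1)) * ((k + 1) * (k + v + 1)) := by gcongr
      _ = _ := by ring
  have l1 := hanti.alternating_series_le_tendsto ht 1
  have l2 := hanti.tendsto_le_alternating_series ht 0
  have hgs : Real.Gamma (1 + v + 1) = (v + 1) * Real.Gamma (v + 1) := by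
    rw [← Real.Gamma_add_one (by positivity)]; congr 1; ring
  change _ ≤ bPhi v z at l1
  change bPhi v z ≤ _ at l2
  simp [Finset.sum_range_succ, hgs] at l1 l2
  constructor
  · calc 1 - z / (v + 1) = Real.Gamma (v + 1) * ((Real.Gamma (v + 1))⁻¹ + -(z / ((v + 1) * Real.Gamma (v + 1)))) := by
          field_simp
          try ring
      _ ≤ _ := by
          gcongr
          linarith
  · calc _ ≤ Real.Gamma (v + 1) * (Real.Gamma (v + 1))⁻¹ := by gcongr
      _ = 1 := by field_simp

lemma bPhi_ratio_base (y : ℝ) (hy : 0 ≤ y) (v : ℝ) (hv : 0 ≤ v) (h1 : y ^ 2 / 4 ≤ (v + 1) / 2) (h2 : y ≤ v + 1) :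
    0 < bPhi (v + 1) (y ^ 2 / 4) ∧ y / 2 * bPhi (v + 1) (y ^ 2 / 4) ≤ bPhi v (y ^ 2 / 4) := by
  have hz : 0 ≤ y ^ 2 / 4 := by positivity
  obtain ⟨a1, a2⟩ := bPhi_alt v hv _ hz (by linarith)
  obtain ⟨b1, b2⟩ := bPhi_alt (v + 1) (by linarith) _ hz (by linarith)
  have hg : 0 < Real.Gamma (v + 1) := Real.Gamma_pos_of_pos (by positivity)
  have hg2 : Real.Gamma (v + 1 + 1) = (v + 1) * Real.Gamma (v + 1) := Real.Gamma_add_one (by positivity)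
  have c1 : y ^ 2 / 4 / (v + 1) ≤ 1 / 2 := by
    rw [div_le_iff₀ (by positivity)]; linarith
  have c2 : y ^ 2 / 4 / (v + 1 + 1) ≤ 1 / 2 := by
    rw [div_le_iff₀ (by positivity)]; linarith
  have p1 : 0 < bPhi (v + 1) (y ^ 2 / 4) := by
    have : 0 < Real.Gamma (v + 1 + 1) * bPhi (v + 1) (y ^ 2 / 4) := by linarith
    rw [hg2] at this
    exact (mul_pos_iff_of_pos_left (by positivity)).1 this
  refine ⟨p1, ?_⟩
  rw [hg2] at b2
  have : Real.Gamma (v + 1) * (y / 2 * bPhi (v + 1) (y ^ 2 / 4)) ≤ Real.Gamma (v + 1) * bPhi v (y ^ 2 / 4) := by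
    have : y / 2 * (Real.Gamma (v + 1) * bPhi (v + 1) (y ^ 2 / 4)) ≤ (v + 1) / 2 * (Real.Gamma (v + 1) * bPhi (v + 1) (y ^ 2 / 4)) := by
      gcongr
    nlinarith
  exact le_of_mul_le_mul_left this hg

lemma bPhi_ratio_aux (y : ℝ) (hy : 0 ≤ y) (n : ℕ) : ∀ (v : ℝ) (hv : 0 ≤ v) (h1 : y ^ 2 / 4 ≤ (v + n + 1) / 2) (h2 : y ≤ v + 1),
    0 < bPhi (v + 1) (y ^ 2 / 4) ∧ y / 2 * bPhi (v + 1) (y ^ 2 / 4) ≤ bPhi v (y ^ 2 / 4) := by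
  induction n with
  | zero => intro v hv h1 h2; exact bPhi_ratio_base y hy v hv (by simpa using h1) h2
  | succ n ih =>
    intro v hv h1 h2
    obtain ⟨p, q⟩ := ih (v + 1) (by linarith) (by push_cast at h1; linarith) (by linarith)
    rw [show v + 1 + 1 = v + 2 by ring] at p q
    have hr := bPhi_rec v hv (y ^ 2 / 4)
    rcases hy.eq_or_lt with h0 | h0
    · subst h0
      exact bPhi_ratio_base 0 le_rfl v hv (by simp; positivity) (by positivity)
    have p1 : 0 < bPhi (v + 1) (y ^ 2 / 4) := lt_of_lt_of_le (by positivity) q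
    refine ⟨p1, ?_⟩
    have e1 : y ^ 2 / 4 * bPhi (v + 2) (y ^ 2 / 4) ≤ y / 2 * bPhi (v + 1) (y ^ 2 / 4) := by
      calc _ = y / 2 * (y / 2 * bPhi (v + 2) (y ^ 2 / 4)) := by ring
        _ ≤ _ := by gcongr
    have e2 : y * bPhi (v + 1) (y ^ 2 / 4) ≤ (v + 1) * bPhi (v + 1) (y ^ 2 / 4) := by gcongr
    linarith

lemma bPhi_pos (y : ℝ) (hy : 0 ≤ y) (v : ℝ) (hv : 0 ≤ v) (h2 : y ≤ v + 1) : 0 < bPhi (v + 1) (y ^ 2 / 4) := by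
  obtain ⟨n, hn⟩ := exists_nat_ge (y ^ 2 / 2)
  exact (bPhi_ratio_aux y hy n v hv (by linarith) h2).1

/-- Paris's inequality, in terms of the reduced series. -/
lemma bPhi_paris (v : ℝ) (hv : 0 < v) (z : ℝ) (hz : 0 ≤ z) (hzv : z ≤ v ^ 2 / 4) :
    bPhi v (v ^ 2 / 4) * Real.exp ((v ^ 2 / 4 - z) / (v + 1)) ≤ bPhi v z := by
  have hd : ∀ t, HasDerivAt (fun t => bPhi v t * Real.exp (t / (v + 1)))
      (-bPhi (v + 1) t * Real.exp (t / (v + 1)) + bPhi v t * (Real.exp (t / (v + 1)) * (1 / (v + 1)))) t := by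
    intro t
    exact (bPhi_deriv v hv.le t).mul (((hasDerivAt_id t).div_const (v + 1)).exp)
  have hanti : AntitoneOn (fun t => bPhi v t * Real.exp (t / (v + 1))) (Set.Icc 0 (v ^ 2 / 4)) := by
    apply antitoneOn_of_deriv_nonpos (convex_Icc _ _)
    · exact fun t _ => (hd t).continuousAt.continuousWithinAt
    · exact fun t _ => (hd t).differentiableAt.differentiableWithinAt
    · intro t ht
      rw [interior_Icc] at ht
      rw [(hd t).deriv, bPhi_rec v hv.le t]
      have hp : 0 < bPhi (v + 2) t := by
        have := bPhi_pos (2 * √t) (by positivity) (v + 1) (by positivity) ?_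
        · have e : (2 * √t) ^ 2 / 4 = t := by
            rw [mul_pow, Real.sq_sqrt ht.1.le]; ring
          rw [e] at this
          rw [show v + 2 = v + 1 + 1 by ring]; exact this
        · have : √t ≤ v / 2 := by
            rw [Real.sqrt_le_left (by positivity)]
            nlinarith [ht.2]
          linarith
      have : -bPhi (v + 1) t * rexp (t / (v + 1)) +
        ((v + 1) * bPhi (v + 1) t - t * bPhi (v + 2) t) * (rexp (t / (v + 1)) * (1 / (v + 1)))
          = - (t * bPhi (v + 2) t * (rexp (t / (v + 1)) * (1 / (v + 1)))) := by
        field_simp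
        ring
      rw [this]
      have := ht.1
      have : 0 ≤ t * bPhi (v + 2) t * (rexp (t / (v + 1)) * (1 / (v + 1))) := by positivity
      linarith
  have := hanti ⟨hz, hzv⟩ ⟨hz.trans hzv, le_rfl⟩ hzv
  simp only at this
  rw [sub_div, Real.exp_sub, mul_div_assoc', div_le_iff₀ (Real.exp_pos _)]
  exact this

lemma log_ratio_scale (y t : ℝ) (hy0 : 0 ≤ y) (hy : y < 1) (ht0 : 0 ≤ t) (ht : t ≤ 1) :
    Real.log (1 + t * y) - Real.log (1 - t * y) ≤ t * (Real.log (1 + y) - Real.log (1 - y)) := by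
  have hty : t * y ≤ y := by nlinarith
  have h1 := Real.hasSum_log_sub_log_of_abs_lt_one (x := y) (by rw [abs_of_nonneg hy0]; exact hy)
  have h2 := Real.hasSum_log_sub_log_of_abs_lt_one (x := t * y)
    (by rw [abs_of_nonneg (by positivity)]; linarith)
  refine hasSum_le ?_ h2 (h1.mul_left t)
  intro k
  have : (t * y) ^ (2 * k + 1) ≤ t * y ^ (2 * k + 1) := by
    rw [mul_pow]
    have : t ^ (2 * k + 1) ≤ t := pow_le_of_le_one ht0 ht (by omega)
    gcongr
  have h3 : (0 : ℝ) ≤ 2 * (1 / (2 * (k : ℝ) + 1)) := by positivity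
  calc _ ≤ 2 * (1 / (2 * (k : ℝ) + 1)) * (t * y ^ (2 * k + 1)) := by gcongr
    _ = _ := by ring

def gUp (x : ℝ) (n : ℕ) : ℝ :=
  ((n : ℝ) + 1) * ((n : ℝ) + 1 + x / 2) ^ (x - 1) / ∏ m ∈ Finset.range n, (1 + x / ((m : ℝ) + 1))

lemma gUp_anti (x : ℝ) (hx0 : 0 ≤ x) (hx1 : x ≤ 1) : Antitone (gUp x) := by
  apply antitone_nat_of_succ_le
  intro n
  have hP : 0 < ∏ m ∈ Finset.range n, (1 + x / ((m : ℝ) + 1)) := Finset.prod_pos (fun m _ => by positivity)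
  unfold gUp
  rw [Finset.prod_range_succ]
  push_cast
  set P := ∏ m ∈ Finset.range n, (1 + x / ((m : ℝ) + 1)) with hPd
  have hn : (0 : ℝ) ≤ n := by positivity
  have key : Real.log (((n : ℝ) + 2) / (n + 1 + x)) ≤ (1 - x) * Real.log (((n : ℝ) + 2 + x / 2) / (n + 1 + x / 2)) := by
    have := log_ratio_scale (1 / (2 * n + 3 + x)) (1 - x) (by positivity)
      (by rw [div_lt_one (by positivity)]; linarith) (by linarith) (by linarith)
    have d : (2 * (n : ℝ) + 3 + x) ≠ 0 := by positivity
    have e1 : 1 + (1 - x) * (1 / (2 * n + 3 + x)) = 2 * ((n : ℝ) + 2) / (2 * n + 3 + x) := by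
      field_simp; ring
    have e2 : 1 - (1 - x) * (1 / (2 * n + 3 + x)) = 2 * ((n : ℝ) + 1 + x) / (2 * n + 3 + x) := by
      field_simp; ring
    have e3 : 1 + (1 / (2 * n + 3 + x)) = 2 * ((n : ℝ) + 2 + x / 2) / (2 * n + 3 + x) := by
      field_simp; ring
    have e4 : 1 - (1 / (2 * n + 3 + x)) = 2 * ((n : ℝ) + 1 + x / 2) / (2 * n + 3 + x) := by
      field_simp; ring
    rw [e1, e2, e3, e4, ← Real.log_div (by positivity) (by positivity), ← Real.log_div (by positivity) (by positivity)] at this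
    convert this using 2
    · field_simp
    · congr 1; field_simp
  have k2 : ((n : ℝ) + 2) / (n + 1 + x) ≤ (((n : ℝ) + 2 + x / 2) / (n + 1 + x / 2)) ^ (1 - x) := by
    rw [Real.rpow_def_of_pos (by positivity), ← Real.log_le_iff_le_exp (by positivity)]
    linarith
  rw [Real.div_rpow (by positivity) (by positivity), div_le_div_iff₀ (by positivity) (by positivity)] at k2
  rw [div_le_div_iff₀ (by positivity) (by positivity), show x - 1 = -(1 - x) by ring,
    Real.rpow_neg (by positivity), Real.rpow_neg (by positivity)]
  rw [show (n : ℝ) + 1 + 1 + x / 2 = n + 2 + x / 2 by ring]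
  set A := ((n : ℝ) + 2 + x / 2) ^ (1 - x) with hA
  set B := ((n : ℝ) + 1 + x / 2) ^ (1 - x) with hB
  have hA0 : 0 < A := by positivity
  have hB0 : 0 < B := by positivity
  have hnn : (n : ℝ) + 1 ≠ 0 := by positivity
  have : ((n : ℝ) + 1) * B⁻¹ * (P * (1 + x / (n + 1))) = P * A⁻¹ * B⁻¹ * (A * (n + 1 + x)) := by
    field_simp
  rw [this]
  have : ((n : ℝ) + 1 + 1) * A⁻¹ * P = P * A⁻¹ * B⁻¹ * ((n + 2) * B) := by
    field_simp
    ring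
  rw [this]
  gcongr

lemma gUp_tendsto (x : ℝ) (hx0 : 0 ≤ x) : Filter.Tendsto (gUp x) Filter.atTop (nhds (Real.Gamma (1 + x))) := by
  have h := Real.GammaSeq_tendsto_Gamma (1 + x)
  rw [← Filter.tendsto_add_atTop_iff_nat 1]
  have hc : ∀ a : ℝ, Filter.Tendsto (fun m : ℕ => ((m : ℝ) + a) / m) Filter.atTop (nhds 1) := by
    intro a
    have h1 : Filter.Tendsto (fun m : ℕ => 1 + a / (m : ℝ)) Filter.atTop (nhds (1 + 0)) :=
      tendsto_const_nhds.add (tendsto_const_div_atTop_nhds_zero_nat a)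
    rw [add_zero] at h1
    refine h1.congr' ?_
    filter_upwards [Filter.eventually_gt_atTop 0] with m hm
    field_simp
  have h2 := ((h.mul (hc 2)).mul (hc 1)).mul ((hc (2 + x / 2)).rpow_const (p := x - 1) (Or.inl one_ne_zero))
  simp only [mul_one, Real.one_rpow] at h2
  refine h2.congr' ?_
  filter_upwards [Filter.eventually_gt_atTop 0] with m hm
  have hm' : (0 : ℝ) < m := by exact_mod_cast hm
  unfold Real.GammaSeq gUp
  have hprod : ∏ j ∈ Finset.range (m + 1), (1 + x + (j : ℝ)) = (Nat.factorial (m + 1) : ℝ) * ∏ j ∈ Finset.range (m + 1), (1 + x / ((j : ℝ) + 1)) := by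
    rw [← Finset.prod_range_add_one_eq_factorial]
    push_cast
    rw [← Finset.prod_mul_distrib]
    apply Finset.prod_congr rfl
    intro j _
    field_simp
    ring
  have hP : 0 < ∏ j ∈ Finset.range (m + 1), (1 + x / ((j : ℝ) + 1)) := Finset.prod_pos (fun m _ => by positivity)
  rw [hprod, Nat.factorial_succ, Real.div_rpow (by positivity) (by positivity), Real.rpow_add hm', Real.rpow_one, Real.rpow_sub_one hm'.ne']
  push_cast
  rw [show (m : ℝ) + 1 + 1 + x / 2 = m + (2 + x / 2) by ring]
  have := Real.rpow_pos_of_pos hm' x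
  field_simp
  ring

lemma gam_upper (x : ℝ) (hx0 : 0 ≤ x) (hx1 : x ≤ 1) (n : ℕ) : Real.Gamma (1 + x) ≤ gUp x n :=
  (gUp_anti x hx0 hx1).le_of_tendsto (gUp_tendsto x hx0) n

/-- The cube of the constant. -/
lemma gam_third : Real.Gamma (1 / 3) ^ 3 ≤ 19.232 := by
  have h := gam_upper (1 / 3) (by norm_num) (by norm_num) 11
  have h3 : Real.Gamma (1 + 1 / 3) = 1 / 3 * Real.Gamma (1 / 3) := by
    rw [add_comm]; exact Real.Gamma_add_one (by norm_num)
  have hp : 0 < Real.Gamma (1 / 3) := Real.Gamma_pos_of_pos (by norm_num)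
  have h4 : Real.Gamma (1 / 3) ≤ 3 * gUp (1 / 3) 11 := by linarith
  calc Real.Gamma (1 / 3) ^ 3 ≤ (3 * gUp (1 / 3) 11) ^ 3 := by gcongr
    _ ≤ 19.232 := by
      unfold gUp
      rw [mul_pow, div_pow, mul_pow, ← Real.rpow_natCast _ 3, ← Real.rpow_natCast _ 3,
        ← Real.rpow_natCast (_ ^ _) 3, ← Real.rpow_mul (by norm_num)]
      rw [show ((1 : ℝ) / 3 - 1) * ((3 : ℕ) : ℝ) = -((2 : ℕ) : ℝ) by norm_num, Real.rpow_neg (by norm_num), Real.rpow_natCast,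
        Real.rpow_natCast, Real.rpow_natCast]
      norm_num [Finset.prod_range_succ]

lemma lgU (x q : ℝ) (n : ℕ) (h0 : 0 < n) (hx : 0 < x) (hq : 0 ≤ q / n)
    (h : x ≤ (∑ i ∈ Finset.range 8, (q / n) ^ i / (Nat.factorial i : ℝ)) ^ n) : Real.log x ≤ q := by
  have hn : (0 : ℝ) < n := by exact_mod_cast h0
  rw [Real.log_le_iff_le_exp hx]
  calc x ≤ _ := h
    _ ≤ (Real.exp (q / n)) ^ n := by
      gcongr
      exact Real.sum_le_exp_of_nonneg hq 8
    _ = Real.exp q := by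
      rw [← Real.exp_nat_mul]; congr 1; field_simp

lemma lgL (x q : ℝ) (n : ℕ) (h0 : 0 < n) (hx : 0 < x) (hq : 0 ≤ q / n) (hq1 : q / n ≤ 1)
    (h : (∑ i ∈ Finset.range 8, (q / n) ^ i / (Nat.factorial i : ℝ) + (q / n) ^ 8 * 9 / (Nat.factorial 8 * 8)) ^ n ≤ x) :
    q ≤ Real.log x := by
  have hn : (0 : ℝ) < n := by exact_mod_cast h0
  rw [Real.le_log_iff_exp_le hx]
  refine le_trans ?_ h
  calc Real.exp q = (Real.exp (q / n)) ^ n := by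
        rw [← Real.exp_nat_mul]; congr 1; field_simp
    _ ≤ _ := by
      gcongr
      have := Real.exp_bound' hq hq1 (n := 8) (by norm_num)
      norm_num at this ⊢
      linarith

def sA (v : ℝ) : ℝ := v * Real.log v + Real.log (v + 0.095) / 3
def sR (v : ℝ) : ℝ := (1 + v / 6) * (1 + v / 2) * (1 + v - v ^ 2 / 4)
def sB (v : ℝ) : ℝ := -v * Real.log (6 + v) + Real.log (sR v)
/-- three times the tangent of `sA` at `s`, plus `3 sB`, minus the constant, grouped -/
def sT (s v : ℝ) : ℝ := Real.log ((s + 0.095) * sR v ^ 3 / 0.08953) - 3 * v * Real.log ((6 + v) / s)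
   + 3 * (v - s) + (v - s) / (s + 0.095)

lemma sR_pos (v : ℝ) (h0 : 0 ≤ v) (h1 : v ≤ 1) : 0 < sR v := by
  unfold sR
  have : 0 < 1 + v - v ^ 2 / 4 := by nlinarith
  positivity

lemma sA_tangent (s v : ℝ) (hs : 0 < s) (hv : 0 < v) :
    sA s + (Real.log s + 1 + 1 / (3 * (s + 0.095))) * (v - s) ≤ sA v := by
  have hd : ∀ t : ℝ, 0 < t → HasDerivAt sA (Real.log t + 1 + 1 / (3 * (t + 0.095))) t := by
    intro t ht
    have h1 := (hasDerivAt_id t).mul (Real.hasDerivAt_log ht.ne')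
    have h2 := (((hasDerivAt_id t).add_const 0.095).log (by simp; positivity)).div_const 3
    have := h1.add h2
    refine this.congr_deriv ?_
    simp
    field_simp
  have hd2 : ∀ t : ℝ, 0 < t → HasDerivAt (fun t => Real.log t + 1 + 1 / (3 * (t + 0.095)))
     (1 / t + -(3 * 1) / (3 * (t + 0.095)) ^ 2) t := by
    intro t ht
    have h2 := (((hasDerivAt_id t).add_const 0.095).const_mul 3).inv (by simp; positivity)
    have := ((Real.hasDerivAt_log ht.ne').add_const 1).add h2
    refine (this.congr_deriv ?_).congr_of_eventuallyEq ?_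
    · simp
    · filter_upwards with y
      simp
  have hmono : MonotoneOn (fun t => Real.log t + 1 + 1 / (3 * (t + 0.095))) (Set.Ioi 0) := by
    apply monotoneOn_of_deriv_nonneg (convex_Ioi 0)
    · exact fun t ht => (hd2 t ht).continuousAt.continuousWithinAt
    · rw [interior_Ioi]
      exact fun t ht => (hd2 t ht).differentiableAt.differentiableWithinAt
    · rw [interior_Ioi]
      intro t ht
      have ht : 0 < t := ht
      rw [(hd2 t ht).deriv, div_add_div _ _ (by positivity) (by positivity)]
      apply div_nonneg _ (by positivity)
      nlinarith [sq_nonneg (t - 0.07)]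
  set m := Real.log s + 1 + 1 / (3 * (s + 0.095)) with hm
  have hD : ∀ t : ℝ, 0 < t → HasDerivAt (fun t => sA t - m * (t - s)) (Real.log t + 1 + 1 / (3 * (t + 0.095)) - m) t := by
    intro t ht
    have := (hd t ht).sub (((hasDerivAt_id t).sub_const s).const_mul m)
    exact this.congr_deriv (by simp)
  rcases le_total s v with h | h
  · have : MonotoneOn (fun t => sA t - m * (t - s)) (Set.Icc s v) := by
      apply monotoneOn_of_deriv_nonneg (convex_Icc _ _)
      · exact fun t ht => (hD t (by linarith [ht.1])).continuousAt.continuousWithinAt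
      · rw [interior_Icc]
        exact fun t ht => (hD t (by linarith [ht.1])).differentiableAt.differentiableWithinAt
      · rw [interior_Icc]
        intro t ht
        have h0 : 0 < t := by linarith [ht.1]
        rw [(hD t h0).deriv]
        have := hmono hs h0 ht.1.le
        simp only at this
        linarith
    have := this ⟨le_rfl, h⟩ ⟨h, le_rfl⟩ h
    simp at this
    linarith
  · have : AntitoneOn (fun t => sA t - m * (t - s)) (Set.Icc v s) := by
      apply antitoneOn_of_deriv_nonpos (convex_Icc _ _)
      · exact fun t ht => (hD t (by linarith [ht.1])).continuousAt.continuousWithinAt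
      · rw [interior_Icc]
        exact fun t ht => (hD t (by linarith [ht.1])).differentiableAt.differentiableWithinAt
      · rw [interior_Icc]
        intro t ht
        have h0 : 0 < t := by linarith [ht.1]
        rw [(hD t h0).deriv]
        have := hmono h0 hs ht.2.le
        simp only at this
        linarith
    have := this ⟨le_rfl, h⟩ ⟨h, le_rfl⟩ h
    simp at this
    linarith

lemma log_concave_comp (f : ℝ → ℝ) (hf : ConcaveOn ℝ (Set.Icc 0 1) f) (hp : ∀ x ∈ Set.Icc (0 : ℝ) 1, 0 < f x) :
    ConcaveOn ℝ (Set.Icc 0 1) (fun x => Real.log (f x)) := by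
  refine ⟨convex_Icc _ _, ?_⟩
  intro x hx y hy a b ha hb hab
  have h1 := strictConcaveOn_log_Ioi.concaveOn.2 (hp x hx) (hp y hy) ha hb hab
  have h2 := hf.2 hx hy ha hb hab
  refine h1.trans (Real.log_le_log ?_ h2)
  exact (convex_Ioi (0 : ℝ)) (hp x hx) (hp y hy) ha hb hab

lemma affine_concave (c d : ℝ) : ConcaveOn ℝ (Set.Icc (0 : ℝ) 1) (fun x => c + d * x) := by
  refine ⟨convex_Icc _ _, ?_⟩
  intro x _ y _ a b _ _ hab
  simp only [smul_eq_mul]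
  have : b = 1 - a := by linarith
  subst this
  apply le_of_eq; ring

lemma sB_concave : ConcaveOn ℝ (Set.Icc 0 1) sB := by
  have h1 : ConcaveOn ℝ (Set.Icc (0 : ℝ) 1) (fun v => 6 * Real.log (6 + 1 * v)) :=
    (log_concave_comp _ (affine_concave 6 1) (fun x hx => by linarith [hx.1])).smul (by norm_num : (0 : ℝ) ≤ 6)
  have h2 : ConcaveOn ℝ (Set.Icc (0 : ℝ) 1) (fun v => -((6 + v) * Real.log (6 + v))) := by
    refine ⟨convex_Icc _ _, ?_⟩
    intro x hx y hy a b ha hb hab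
    have := Real.convexOn_mul_log.2 (x := 6 + x) (y := 6 + y) (by simp; linarith [hx.1]) (by simp; linarith [hy.1]) ha hb hab
    simp only [smul_eq_mul] at this ⊢
    have e : a * (6 + x) + b * (6 + y) = 6 + (a * x + b * y) := by
      have : b = 1 - a := by linarith
      subst this; ring
    rw [e] at this
    linarith
  have h3 := log_concave_comp _ (affine_concave 1 (1 / 6)) (fun x hx => by linarith [hx.1])
  have h4 := log_concave_comp _ (affine_concave 1 (1 / 2)) (fun x hx => by linarith [hx.1])
  have h5 : ConcaveOn ℝ (Set.Icc (0 : ℝ) 1) (fun v => 1 + v - v ^ 2 / 4) := by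
    refine ⟨convex_Icc _ _, ?_⟩
    intro x hx y hy a b ha hb hab
    simp only [smul_eq_mul]
    have : b = 1 - a := by linarith
    subst this
    nlinarith [mul_nonneg (mul_nonneg ha hb) (sq_nonneg (x - y))]
  have h6 := log_concave_comp _ h5 (fun x hx => by nlinarith [hx.1, hx.2])
  refine ((((h1.add h2).add h3).add h4).add h6).congr ?_
  intro v hv
  have a1 := hv.1
  have : 0 < 1 + v - v ^ 2 / 4 := by nlinarith [hv.1, hv.2]
  simp only [Pi.add_apply, sB, sR]
  rw [Real.log_mul (by positivity) (by positivity), Real.log_mul (by positivity) (by positivity)]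
  rw [show 6 + 1 * v = 6 + v by ring, show 1 + 1 / 6 * v = 1 + v / 6 by ring, show 1 + 1 / 2 * v = 1 + v / 2 by ring]
  ring

lemma sT_eq (s v : ℝ) (hs : 0 < s) (h0 : 0 ≤ v) (h1 : v ≤ 1) :
    sT s v = 3 * (sA s + (Real.log s + 1 + 1 / (3 * (s + 0.095))) * (v - s)) + 3 * sB v - Real.log 0.08953 := by
  have hR := sR_pos v h0 h1
  unfold sT sA sB
  rw [Real.log_div (by positivity) (by norm_num), Real.log_mul (by positivity) (by positivity), Real.log_pow,
    Real.log_div (by positivity) (by positivity)]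
  push_cast
  have : s + 0.095 ≠ 0 := by positivity
  field_simp
  ring

lemma small_piece (s p q v : ℝ) (h0 : 0 < v) (hs : 0 < s) (hp : 0 ≤ p) (h1 : p ≤ v) (h2 : v ≤ q) (hq : q ≤ 1)
    (hp' : 0 ≤ sT s p) (hq' : 0 ≤ sT s q) : Real.log 0.08953 ≤ 3 * sA v + 3 * sB v := by
  have hc : ConcaveOn ℝ (Set.Icc 0 1) (fun v => sT s v) := by
    have h := (sB_concave.smul (by norm_num : (0 : ℝ) ≤ 3)).add (affine_concave
      (3 * (sA s + (Real.log s + 1 + 1 / (3 * (s + 0.095))) * (- s)) - Real.log 0.08953) (3 * (Real.log s + 1 + 1 / (3 * (s + 0.095)))))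
    refine h.congr ?_
    intro x hx
    simp only [Pi.add_apply, smul_eq_mul]
    rw [sT_eq s x hs hx.1 hx.2]
    ring
  have hm := hc.min_le_of_mem_Icc (x := p) (y := q) (z := v) ⟨hp, by linarith⟩ ⟨by linarith, hq⟩ ⟨h1, h2⟩
  have hT : 0 ≤ sT s v := le_trans (le_min hp' hq') hm
  rw [sT_eq s v hs h0.le (by linarith)] at hT
  have := sA_tangent s v hs h0
  linarith

lemma small_piece0 (v : ℝ) (h0 : 0 < v) (h1 : (0/1) ≤ v) (h2 : v ≤ (3/50)) : Real.log 0.08953 ≤ 3 * sA v + 3 * sB v := by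
  refine small_piece (163/5000) (0/1) (3/50) v h0 (by norm_num) (by norm_num) h1 h2 (by norm_num) ?_ ?_
  · have hU := lgU ((6 + (0/1)) / (163/5000)) (521523/100000) 11 (by norm_num) (by norm_num) (by norm_num) (by norm_num [Finset.sum_range_succ, Nat.factorial])
    have hL := lgL (((163/5000) + 0.095) * sR (0/1) ^ 3 / 0.08953) (35431/100000) 1 (by norm_num) (by norm_num [sR]) (by norm_num) (by norm_num) (by norm_num [sR, Finset.sum_range_succ, Nat.factorial])
    unfold sT; linarith
  · have hU := lgU ((6 + (3/50)) / (163/5000)) (261259/50000) 11 (by norm_num) (by norm_num) (by norm_num) (by norm_num [Finset.sum_range_succ, Nat.factorial])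
    have hL := lgL (((163/5000) + 0.095) * sR (3/50) ^ 3 / 0.08953) (6451/10000) 2 (by norm_num) (by norm_num [sR]) (by norm_num) (by norm_num) (by norm_num [sR, Finset.sum_range_succ, Nat.factorial])
    unfold sT; linarith

lemma small_piece1 (v : ℝ) (h0 : 0 < v) (h1 : (3/50) ≤ v) (h2 : v ≤ (7/25)) : Real.log 0.08953 ≤ 3 * sA v + 3 * sB v := by
  refine small_piece (1/8) (3/50) (7/25) v h0 (by norm_num) (by norm_num) h1 h2 (by norm_num) ?_ ?_
  · have hU := lgU ((6 + (3/50)) / (1/8)) (194059/50000) 8 (by norm_num) (by norm_num) (by norm_num) (by norm_num [Finset.sum_range_succ, Nat.factorial])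
    have hL := lgL (((1/8) + 0.095) * sR (3/50) ^ 3 / 0.08953) (59491/50000) 3 (by norm_num) (by norm_num [sR]) (by norm_num) (by norm_num) (by norm_num [sR, Finset.sum_range_succ, Nat.factorial])
    unfold sT; linarith
  · have hU := lgU ((6 + (7/25)) / (1/8)) (97921/25000) 8 (by norm_num) (by norm_num) (by norm_num) (by norm_num [Finset.sum_range_succ, Nat.factorial])
    have hL := lgL (((1/8) + 0.095) * sR (7/25) ^ 3 / 0.08953) (53081/25000) 5 (by norm_num) (by norm_num [sR]) (by norm_num) (by norm_num) (by norm_num [sR, Finset.sum_range_succ, Nat.factorial])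
    unfold sT; linarith

lemma small_piece2 (v : ℝ) (h0 : 0 < v) (h1 : (7/25) ≤ v) (h2 : v ≤ (59/100)) : Real.log 0.08953 ≤ 3 * sA v + 3 * sB v := by
  refine small_piece (43/100) (7/25) (59/100) v h0 (by norm_num) (by norm_num) h1 h2 (by norm_num) ?_ ?_
  · have hU := lgU ((6 + (7/25)) / (43/100)) (268137/100000) 6 (by norm_num) (by norm_num) (by norm_num) (by norm_num [Finset.sum_range_succ, Nat.factorial])
    have hL := lgL (((43/100) + 0.095) * sR (7/25) ^ 3 / 0.08953) (299301/100000) 6 (by norm_num) (by norm_num [sR]) (by norm_num) (by norm_num) (by norm_num [sR, Finset.sum_range_succ, Nat.factorial])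
    unfold sT; linarith
  · have hU := lgU ((6 + (59/100)) / (43/100)) (54591/20000) 6 (by norm_num) (by norm_num) (by norm_num) (by norm_num [Finset.sum_range_succ, Nat.factorial])
    have hL := lgL (((43/100) + 0.095) * sR (59/100) ^ 3 / 0.08953) (202403/50000) 9 (by norm_num) (by norm_num [sR]) (by norm_num) (by norm_num) (by norm_num [sR, Finset.sum_range_succ, Nat.factorial])
    unfold sT; linarith

lemma small_piece3 (v : ℝ) (h0 : 0 < v) (h1 : (59/100) ≤ v) (h2 : v ≤ (91/100)) : Real.log 0.08953 ≤ 3 * sA v + 3 * sB v := by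
  refine small_piece (19/25) (59/100) (91/100) v h0 (by norm_num) (by norm_num) h1 h2 (by norm_num) ?_ ?_
  · have hU := lgU ((6 + (59/100)) / (19/25)) (108001/50000) 5 (by norm_num) (by norm_num) (by norm_num) (by norm_num [Finset.sum_range_succ, Nat.factorial])
    have hL := lgL (((19/25) + 0.095) * sR (59/100) ^ 3 / 0.08953) (453577/100000) 10 (by norm_num) (by norm_num [sR]) (by norm_num) (by norm_num) (by norm_num [sR, Finset.sum_range_succ, Nat.factorial])
    unfold sT; linarith
  · have hU := lgU ((6 + (91/100)) / (19/25)) (220743/100000) 5 (by norm_num) (by norm_num) (by norm_num) (by norm_num [Finset.sum_range_succ, Nat.factorial])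
    have hL := lgL (((19/25) + 0.095) * sR (91/100) ^ 3 / 0.08953) (540229/100000) 11 (by norm_num) (by norm_num [sR]) (by norm_num) (by norm_num) (by norm_num [sR, Finset.sum_range_succ, Nat.factorial])
    unfold sT; linarith

lemma small_piece4 (v : ℝ) (h0 : 0 < v) (h1 : (91/100) ≤ v) (h2 : v ≤ (1/1)) : Real.log 0.08953 ≤ 3 * sA v + 3 * sB v := by
  refine small_piece (1/1) (91/100) (1/1) v h0 (by norm_num) (by norm_num) h1 h2 (by norm_num) ?_ ?_
  · have hU := lgU ((6 + (91/100)) / (1/1)) (193299/100000) 4 (by norm_num) (by norm_num) (by norm_num) (by norm_num [Finset.sum_range_succ, Nat.factorial])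
    have hL := lgL (((1/1) + 0.095) * sR (91/100) ^ 3 / 0.08953) (56497/10000) 12 (by norm_num) (by norm_num [sR]) (by norm_num) (by norm_num) (by norm_num [sR, Finset.sum_range_succ, Nat.factorial])
    unfold sT; linarith
  · have hU := lgU ((6 + (1/1)) / (1/1)) (97297/50000) 4 (by norm_num) (by norm_num) (by norm_num) (by norm_num [Finset.sum_range_succ, Nat.factorial])
    have hL := lgL (((1/1) + 0.095) * sR (1/1) ^ 3 / 0.08953) (293081/50000) 12 (by norm_num) (by norm_num [sR]) (by norm_num) (by norm_num) (by norm_num [sR, Finset.sum_range_succ, Nat.factorial])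
    unfold sT; linarith

lemma small_all (v : ℝ) (h0 : 0 < v) (h1 : v ≤ 1) : Real.log 0.08953 ≤ 3 * sA v + 3 * sB v := by
  rcases le_total v (3/50) with h | h
  · exact small_piece0 v h0 (by linarith) h
  rcases le_total v (7/25) with h' | h'
  · exact small_piece1 v h0 h h'
  rcases le_total v (59/100) with h'' | h''
  · exact small_piece2 v h0 h' h''
  rcases le_total v (91/100) with h3 | h3
  · exact small_piece3 v h0 h'' h3
  · exact small_piece4 v h0 h3 (by linarith)

lemma bJ_small (v : ℝ) (h0 : 0 < v) (h1 : v ≤ 1) :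
    0 < (v / 2) ^ v * bPhi v (v ^ 2 / 4) ∧ 0.08953 ≤ ((v / 2) ^ v * bPhi v (v ^ 2 / 4)) ^ 3 * (v + 0.095) := by
  have hG := gam_upper v h0.le h1 2
  have hg : 0 < Real.Gamma (v + 1) := Real.Gamma_pos_of_pos (by positivity)
  have ha := (bPhi_alt v h0.le (v ^ 2 / 4) (by positivity) (by nlinarith)).1
  rw [add_comm 1 v] at hG
  have hq : 0 < 1 + v - v ^ 2 / 4 := by nlinarith
  have hup : gUp v 2 = 3 * (3 + v / 2) ^ (v - 1) / ((1 + v) * (1 + v / 2)) := by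
    unfold gUp
    simp [Finset.prod_range_succ]
    norm_num
  have hup0 : 0 < gUp v 2 := hg.trans_le hG
  have e1 : 1 - v ^ 2 / 4 / (v + 1) = (1 + v - v ^ 2 / 4) / (1 + v) := by
    field_simp; ring
  have hPhi : (1 + v - v ^ 2 / 4) / (1 + v) / gUp v 2 ≤ bPhi v (v ^ 2 / 4) := by
    rw [e1] at ha
    have p : 0 < (1 + v - v ^ 2 / 4) / (1 + v) := by positivity
    have hb : 0 < bPhi v (v ^ 2 / 4) := (mul_pos_iff_of_pos_left hg).1 (p.trans_le ha)
    rw [div_le_iff₀ hup0]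
    nlinarith
  have hE : Real.exp (v * Real.log v + sB v) = (v / 2) ^ v * ((1 + v - v ^ 2 / 4) / (1 + v) / gUp v 2) := by
    rw [hup]
    unfold sB sR
    have r1 : Real.exp (v * Real.log v) = v ^ v := by rw [Real.rpow_def_of_pos h0, mul_comm]
    have r2 : Real.exp (-v * Real.log (6 + v)) = ((6 + v) ^ v)⁻¹ := by
      rw [Real.rpow_def_of_pos (by positivity), neg_mul, Real.exp_neg, mul_comm]
    rw [Real.exp_add, Real.exp_add, Real.exp_log (by positivity), r1, r2, show 3 + v / 2 = (6 + v) / 2 by ring,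
      Real.rpow_sub_one (by positivity), Real.div_rpow (by positivity) (by positivity), Real.div_rpow (by positivity) (by positivity)]
    field_simp
    ring
  have hJ : Real.exp (v * Real.log v + sB v) ≤ (v / 2) ^ v * bPhi v (v ^ 2 / 4) := by
    rw [hE]; gcongr
  refine ⟨(Real.exp_pos _).trans_le hJ, ?_⟩
  calc (0.08953 : ℝ) ≤ Real.exp (3 * sA v + 3 * sB v) := (Real.log_le_iff_le_exp (by norm_num)).1 (small_all v h0 h1)
    _ = Real.exp (v * Real.log v + sB v) ^ 3 * (v + 0.095) := by
      rw [← Real.exp_nat_mul, show 3 * sA v + 3 * sB v = ((3 : ℕ) : ℝ) * (v * Real.log v + sB v) + Real.log (v + 0.095) by unfold sA; push_cast; ring,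
        Real.exp_add, Real.exp_log (by positivity)]
    _ ≤ _ := by gcongr

lemma lap_int (s : ℝ) (hs : -1 < s) (b : ℝ) (hb : 0 < b) :
    IntegrableOn (fun t : ℝ => t ^ s * Real.exp (-b * t)) (Set.Ioi 0) := by
  have := integrableOn_rpow_mul_exp_neg_mul_rpow (p := 1) hs one_pos hb
  simpa using this

lemma lap_cint (s : ℝ) (hs : -1 < s) (r : ℂ) (hr : 0 < r.re) :
    IntegrableOn (fun t : ℝ => ((t ^ s : ℝ) : ℂ) * Complex.exp (-(r * t))) (Set.Ioi 0) := by
  have h := lap_int s hs r.re hr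
  refine Integrable.mono' h ?_ ?_
  · apply Measurable.aestronglyMeasurable
    fun_prop
  · refine (ae_restrict_iff' measurableSet_Ioi).2 (Filter.Eventually.of_forall fun t ht => ?_)
    rw [norm_mul, Complex.norm_exp, Complex.norm_real, Real.norm_of_nonneg (Real.rpow_nonneg (le_of_lt ht) _)]
    simp

lemma lap_deriv (s : ℝ) (hs : 0 < s) (r : ℂ) (hr : 0 < r.re) :
    DifferentiableAt ℂ (fun r : ℂ => ∫ t in Set.Ioi (0:ℝ), ((t ^ (s-1) : ℝ) : ℂ) * Complex.exp (-(r * t))) r := by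
  have key := hasDerivAt_integral_of_dominated_loc_of_deriv_le (μ := volume.restrict (Set.Ioi (0:ℝ)))
    (F := fun (r : ℂ) (t : ℝ) => ((t ^ (s-1) : ℝ) : ℂ) * Complex.exp (-(r * t)))
    (F' := fun (r : ℂ) (t : ℝ) => ((t ^ (s-1) : ℝ) : ℂ) * (Complex.exp (-(r * t)) * (-t)))
    (x₀ := r) (s := {z : ℂ | r.re / 2 < z.re}) (bound := fun t => t ^ s * Real.exp (-(r.re/2) * t)) ?_ ?_ ?_ ?_ ?_ ?_ ?_
  · exact key.2.differentiableAt
  · exact (isOpen_lt continuous_const Complex.continuous_re).mem_nhds (by simp; linarith)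
  · refine Filter.Eventually.of_forall fun z => ?_
    apply Measurable.aestronglyMeasurable
    fun_prop
  · exact lap_cint _ (by linarith) r hr
  · apply Measurable.aestronglyMeasurable
    fun_prop
  · refine (ae_restrict_iff' measurableSet_Ioi).2 (Filter.Eventually.of_forall fun t ht z hz => ?_)
    have ht0 : 0 < t := ht
    rw [norm_mul, norm_mul, Complex.norm_exp, Complex.norm_real, norm_neg, Complex.norm_real, Real.norm_of_nonneg (Real.rpow_nonneg (le_of_lt ht) _), Real.norm_of_nonneg ht0.le]
    rw [show t ^ s = t ^ (s-1) * t by rw [← Real.rpow_add_one ht0.ne']; simp]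
    have : rexp (-(z * (t:ℂ))).re ≤ rexp (-(r.re/2) * t) := by
      apply Real.exp_le_exp.2
      simp
      have : r.re / 2 < z.re := hz
      nlinarith
    have h1 : 0 ≤ t ^ (s-1) := Real.rpow_nonneg ht0.le _
    calc _ ≤ t ^ (s-1) * (rexp (-(r.re/2) * t) * t) := by gcongr
      _ = _ := by ring
  · exact lap_int _ (by linarith) _ (by linarith)
  · refine Filter.Eventually.of_forall fun t z _ => ?_
    apply HasDerivAt.const_mul
    have : HasDerivAt (fun x : ℂ => -(x * (t:ℂ))) (-t) z := by
      have h := ((hasDerivAt_id z).mul_const (t:ℂ)).neg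
      rw [one_mul] at h
      exact h
    exact this.cexp

lemma lap_eq (s : ℝ) (hs : 0 < s) (r : ℂ) (hr : 0 < r.re) :
    ∫ t in Set.Ioi (0:ℝ), ((t ^ (s-1) : ℝ) : ℂ) * Complex.exp (-(r * t)) = Real.Gamma s * r ^ (-s : ℂ) := by
  have hU : IsOpen {z : ℂ | 0 < z.re} := isOpen_lt continuous_const Complex.continuous_re
  have hA : AnalyticOnNhd ℂ (fun r : ℂ => ∫ t in Set.Ioi (0:ℝ), ((t ^ (s-1) : ℝ) : ℂ) * Complex.exp (-(r * t))) {z : ℂ | 0 < z.re} :=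
    DifferentiableOn.analyticOnNhd (fun z hz => (lap_deriv s hs z hz).differentiableWithinAt) hU
  have hB : AnalyticOnNhd ℂ (fun r : ℂ => (Real.Gamma s : ℂ) * r ^ (-s : ℂ)) {z : ℂ | 0 < z.re} := by
    refine DifferentiableOn.analyticOnNhd (fun z hz => ?_) hU
    apply DifferentiableAt.differentiableWithinAt
    apply DifferentiableAt.const_mul
    exact DifferentiableAt.cpow differentiableAt_id (differentiableAt_const _) (Or.inl hz)
  have hP : IsPreconnected {z : ℂ | 0 < z.re} := (convex_halfSpace_re_gt 0).isPreconnected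
  refine hA.eqOn_of_preconnected_of_frequently_eq hB hP (z₀ := 1) (by simp) ?_ hr
  have ht : Filter.Tendsto (fun n : ℕ => ((1 + 1 / ((n:ℝ) + 1) : ℝ) : ℂ)) Filter.atTop (nhdsWithin 1 {1}ᶜ) := by
    refine tendsto_nhdsWithin_iff.2 ⟨?_, Filter.Eventually.of_forall fun n => ?_⟩
    · have h1 : Filter.Tendsto (fun n : ℕ => (1 + 1 / ((n:ℝ) + 1) : ℝ)) Filter.atTop (nhds (1 + 0)) :=
        tendsto_const_nhds.add tendsto_one_div_add_atTop_nhds_zero_nat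
      have := (Complex.continuous_ofReal.tendsto _).comp h1
      rw [add_zero, Complex.ofReal_one] at this
      exact this
    · simp only [Set.mem_compl_iff, Set.mem_singleton_iff]
      intro h
      have h2 : (1 + 1 / ((n:ℝ) + 1) : ℝ) = 1 := by exact_mod_cast h
      have : 0 < 1 / ((n:ℝ) + 1) := by positivity
      linarith
  refine ht.frequently (Filter.Frequently.of_forall fun n => ?_)
  set q : ℝ := 1 + 1 / ((n:ℝ) + 1) with hq
  have hq0 : 0 < q := by positivity
  have h := Real.integral_rpow_mul_exp_neg_mul_Ioi hs hq0
  have h' := congrArg (fun x : ℝ => (x : ℂ)) h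
  rw [← integral_complex_ofReal] at h'
  rw [show -(s:ℂ) = ((-s : ℝ) : ℂ) by push_cast; rfl, ← Complex.ofReal_cpow hq0.le]
  convert h' using 1
  · congr 1; ext t; push_cast; rfl
  · push_cast
    rw [mul_comm, Real.rpow_neg hq0.le, Real.div_rpow zero_le_one hq0.le]
    simp

lemma one_add_I_ne (y : ℝ) : (1 + (y:ℂ) * Complex.I) ≠ 0 := by
  intro h
  have := congrArg Complex.re h
  simp at this

lemma one_add_I_slit (y : ℝ) : (1 + (y:ℂ) * Complex.I) ∈ Complex.slitPlane := by
  left; simp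

lemma norm_one_add_I (y : ℝ) : ‖(1 + (y:ℂ) * Complex.I)‖ = (1 + y ^ 2) ^ ((1:ℝ)/2) := by
  rw [Complex.norm_eq_sqrt_sq_add_sq, Real.sqrt_eq_rpow]
  simp

lemma norm_one_add_I_cpow (y s : ℝ) : ‖(1 + (y:ℂ) * Complex.I) ^ (-s : ℂ)‖ = (1 + ‖y‖ ^ 2) ^ (-s / 2) := by
  rw [show -(s:ℂ) = ((-s : ℝ) : ℂ) by push_cast; rfl, Complex.norm_cpow_real, norm_one_add_I,
    ← Real.rpow_mul (by positivity)]
  rw [Real.norm_eq_abs, sq_abs]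
  congr 1; ring

lemma cpow_cont (s : ℝ) : Continuous (fun y : ℝ => (1 + (y:ℂ) * Complex.I) ^ (-s : ℂ)) := by
  refine continuous_iff_continuousAt.2 fun y => ?_
  exact ContinuousAt.cpow (by fun_prop) continuousAt_const (one_add_I_slit y)

lemma cpow_integrable (s : ℝ) (hs : 1 < s) : Integrable (fun y : ℝ => (1 + (y:ℂ) * Complex.I) ^ (-s : ℂ)) := by
  have h := integrable_rpow_neg_one_add_norm_sq (E := ℝ) (μ := volume) (r := s) (by simpa using hs)
  refine Integrable.mono' h (cpow_cont s).aestronglyMeasurable (Filter.Eventually.of_forall fun y => ?_)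
  rw [norm_one_add_I_cpow]

def hkf (s t : ℝ) : ℂ := (((max t 0) ^ (s - 1) * Real.exp (-t) : ℝ) : ℂ)

lemma hkf_eq (s : ℝ) (hs : 1 < s) : hkf s = Set.indicator (Set.Ioi 0) (fun t : ℝ => ((t ^ (s-1) : ℝ) : ℂ) * Complex.exp (-((1:ℂ) * t))) := by
  ext t
  by_cases ht : 0 < t
  · rw [Set.indicator_of_mem (Set.mem_Ioi.2 ht)]
    simp [hkf, max_eq_left ht.le]
  · rw [Set.indicator_of_notMem (by simpa using ht)]
    simp only [hkf, max_eq_right (not_lt.1 ht)]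
    rw [Real.zero_rpow (by linarith)]; simp

open scoped FourierTransform in
lemma hkf_fourier (s : ℝ) (hs : 1 < s) (w : ℝ) :
    𝓕 (hkf s) w = Real.Gamma s * (1 + ((2 * π * w : ℝ) : ℂ) * Complex.I) ^ (-s : ℂ) := by
  rw [Real.fourier_real_eq_integral_exp_smul, ← lap_eq s (by linarith) _ (by simp), hkf_eq s hs,
    ← integral_indicator measurableSet_Ioi]
  congr 1; ext t
  by_cases ht : t ∈ Set.Ioi (0:ℝ)
  · rw [Set.indicator_of_mem ht, Set.indicator_of_mem ht, smul_eq_mul, mul_left_comm, ← Complex.exp_add]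
    congr 2; push_cast; ring
  · rw [Set.indicator_of_notMem ht, Set.indicator_of_notMem ht, smul_zero]

open scoped FourierTransform in
lemma hankel (s : ℝ) (hs : 1 < s) :
    ∫ y : ℝ, (1 + (y:ℂ) * Complex.I) ^ (-s : ℂ) * Complex.exp (1 + (y:ℂ) * Complex.I) = 2 * π / Real.Gamma s := by
  have hG : (0:ℝ) < Real.Gamma s := Real.Gamma_pos_of_pos (by linarith)
  have hc : Continuous (hkf s) := by
    unfold hkf
    apply Complex.continuous_ofReal.comp
    apply Continuous.mul _ (by fun_prop)
    exact Continuous.rpow_const (by fun_prop) (fun x => Or.inr (by linarith))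
  have hi : Integrable (hkf s) := by
    rw [hkf_eq s hs, integrable_indicator_iff measurableSet_Ioi]
    exact lap_cint _ (by linarith) 1 (by simp)
  have hF : 𝓕 (hkf s) = fun w : ℝ => Real.Gamma s * (1 + ((2 * π * w : ℝ) : ℂ) * Complex.I) ^ (-s : ℂ) := by
    ext w; exact hkf_fourier s hs w
  have hFi : Integrable (𝓕 (hkf s)) := by
    rw [hF]
    exact ((cpow_integrable s hs).comp_mul_left' (by positivity : (2 * π) ≠ 0)).const_mul _
  have h := congrFun (hc.fourierInv_fourier_eq hi hFi) 1
  rw [hF, Real.fourierInv_eq'] at h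
  have h2 := MeasureTheory.Measure.integral_comp_mul_left (fun y : ℝ => Complex.exp ((y:ℂ) * Complex.I) • ((Real.Gamma s : ℂ) * (1 + (y : ℂ) * Complex.I) ^ (-s : ℂ))) (2 * π)
  have h3 : ∫ v : ℝ, Complex.exp (((2 * π * inner ℝ v (1:ℝ) : ℝ) : ℂ) * Complex.I) • ((Real.Gamma s : ℂ) * (1 + ((2 * π * v : ℝ) : ℂ) * Complex.I) ^ (-s : ℂ)) = ∫ v : ℝ, Complex.exp (((2 * π * v : ℝ) : ℂ) * Complex.I) • ((Real.Gamma s : ℂ) * (1 + ((2 * π * v : ℝ) : ℂ) * Complex.I) ^ (-s : ℂ)) := by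
    congr 1; ext v; congr 4; simp
  rw [h3] at h
  rw [h] at h2
  have h4 : ∫ y : ℝ, (1 + (y:ℂ) * Complex.I) ^ (-s : ℂ) * Complex.exp (1 + (y:ℂ) * Complex.I)
      = (Complex.exp 1 / Real.Gamma s) * ∫ y : ℝ, Complex.exp ((y:ℂ) * Complex.I) • ((Real.Gamma s : ℂ) * (1 + (y : ℂ) * Complex.I) ^ (-s : ℂ)) := by
    rw [← integral_const_mul]
    congr 1; ext y
    rw [Complex.exp_add, smul_eq_mul]
    have : (Real.Gamma s : ℂ) ≠ 0 := by exact_mod_cast hG.ne'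
    field_simp
  have hk1 : hkf s 1 = Complex.exp (-1) := by simp [hkf]
  rw [hk1] at h2
  have hpi : (0:ℝ) < 2 * π := by positivity
  rw [abs_of_pos (by positivity), Complex.real_smul, Complex.exp_neg] at h2
  rw [h4]
  have hpc : (π : ℂ) ≠ 0 := by exact_mod_cast Real.pi_pos.ne'
  have he : Complex.exp 1 ≠ 0 := Complex.exp_ne_zero _
  have h5 : ∫ y : ℝ, Complex.exp ((y:ℂ) * Complex.I) • ((Real.Gamma s : ℂ) * (1 + (y : ℂ) * Complex.I) ^ (-s : ℂ)) = 2 * π * (Complex.exp 1)⁻¹ := by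
    rw [h2]
    generalize (∫ y : ℝ, Complex.exp ((y:ℂ) * Complex.I) • ((Real.Gamma s : ℂ) * (1 + (y : ℂ) * Complex.I) ^ (-s : ℂ))) = Q
    push_cast; field_simp
  rw [h5]; field_simp

lemma hkterm (v z y : ℝ) (k : ℕ) :
   ((-1 : ℂ) ^ k * ((z:ℂ) ^ k / (Nat.factorial k : ℂ))) * ((1 + (y:ℂ) * Complex.I) ^ (-((k + v + 1 : ℝ)) : ℂ) * Complex.exp (1 + (y:ℂ) * Complex.I))
   = ((1 + (y:ℂ) * Complex.I) ^ (-((v + 1 : ℝ)) : ℂ) * Complex.exp (1 + (y:ℂ) * Complex.I)) * ((-(z / (1 + (y:ℂ) * Complex.I))) ^ k / (Nat.factorial k : ℂ)) := by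
  have h0 := one_add_I_ne y
  have : (1 + (y:ℂ) * Complex.I) ^ (-((k + v + 1 : ℝ)) : ℂ) = (1 + (y:ℂ) * Complex.I) ^ (-((v + 1 : ℝ)) : ℂ) * ((1 + (y:ℂ) * Complex.I)⁻¹) ^ k := by
    rw [show (-((k + v + 1 : ℝ)) : ℂ) = -((v+1 : ℝ) : ℂ) + (-(k : ℂ)) by push_cast; ring, Complex.cpow_add _ _ h0, Complex.cpow_neg _ (k:ℂ), Complex.cpow_natCast, inv_pow]
  rw [this, neg_pow (z / (1 + (y:ℂ) * Complex.I)), div_pow, inv_pow]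
  ring

lemma bPhi_hankel (v z : ℝ) (hv : 0 < v) :
    Integrable (fun y : ℝ => (1 + (y:ℂ) * Complex.I) ^ (-((v + 1 : ℝ)) : ℂ) * Complex.exp ((1 + (y:ℂ) * Complex.I) - z / (1 + (y:ℂ) * Complex.I))) ∧
    ∫ y : ℝ, (1 + (y:ℂ) * Complex.I) ^ (-((v + 1 : ℝ)) : ℂ) * Complex.exp ((1 + (y:ℂ) * Complex.I) - z / (1 + (y:ℂ) * Complex.I)) = 2 * π * bPhi v z := by
  set F : ℕ → ℝ → ℂ := fun k y => ((-1 : ℂ) ^ k * ((z:ℂ) ^ k / (Nat.factorial k : ℂ))) * ((1 + (y:ℂ) * Complex.I) ^ (-((k + v + 1 : ℝ)) : ℂ) * Complex.exp (1 + (y:ℂ) * Complex.I)) with hF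
  have hbase : ∀ s : ℝ, 1 < s → Integrable (fun y : ℝ => (1 + (y:ℂ) * Complex.I) ^ (-s : ℂ) * Complex.exp (1 + (y:ℂ) * Complex.I)) := by
    intro s hs
    refine Integrable.mono' ((cpow_integrable s hs).norm.mul_const (Real.exp 1)) ?_ (Filter.Eventually.of_forall fun y => ?_)
    · exact ((cpow_cont s).mul (by fun_prop)).aestronglyMeasurable
    · rw [norm_mul, Complex.norm_exp]
      simp
  have hFint : ∀ k, Integrable (F k) := fun k => (hbase (k + v + 1) (by have : (0:ℝ) ≤ k := Nat.cast_nonneg k; linarith)).const_mul _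
  have hsumeq : ∀ y : ℝ, HasSum (fun k => F k y) ((1 + (y:ℂ) * Complex.I) ^ (-((v + 1 : ℝ)) : ℂ) * Complex.exp ((1 + (y:ℂ) * Complex.I) - z / (1 + (y:ℂ) * Complex.I))) := by
    intro y
    have h1 := (NormedSpace.expSeries_div_hasSum_exp (-(z / (1 + (y:ℂ) * Complex.I)))).mul_left ((1 + (y:ℂ) * Complex.I) ^ (-((v + 1 : ℝ)) : ℂ) * Complex.exp (1 + (y:ℂ) * Complex.I))
    rw [← Complex.exp_eq_exp_ℂ] at h1
    rw [sub_eq_add_neg, Complex.exp_add, ← mul_assoc, show (fun k => F k y) = _ from funext fun k => hkterm v z y k]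
    exact h1
  have hn1 : ∀ y : ℝ, 1 ≤ ‖(1 + (y:ℂ) * Complex.I)‖ := by
    intro y
    have := Complex.abs_re_le_norm (1 + (y:ℂ) * Complex.I)
    simpa using this
  have hbound : ∀ k y, ‖F k y‖ ≤ (|z| ^ k / (Nat.factorial k : ℝ)) * ‖(1 + (y:ℂ) * Complex.I) ^ (-((v + 1 : ℝ)) : ℂ) * Complex.exp (1 + (y:ℂ) * Complex.I)‖ := by
    intro k y
    rw [hF]; simp only
    rw [hkterm, norm_mul, mul_comm]
    gcongr
    rw [norm_div, norm_pow, norm_neg, norm_div]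
    simp only [Complex.norm_natCast, Complex.norm_real, Real.norm_eq_abs]
    gcongr
    exact div_le_self (abs_nonneg _) (hn1 y)
  have hsum : Summable fun k => ∫ y, ‖F k y‖ := by
    refine Summable.of_nonneg_of_le (fun k => integral_nonneg fun y => norm_nonneg _) (fun k => ?_) ((Real.summable_pow_div_factorial |z|).mul_right (∫ y : ℝ, ‖(1 + (y:ℂ) * Complex.I) ^ (-((v + 1 : ℝ)) : ℂ) * Complex.exp (1 + (y:ℂ) * Complex.I)‖))
    rw [← integral_const_mul]
    exact integral_mono (hFint k).norm ((hbase (v+1) (by linarith)).norm.const_mul _) (fun y => hbound k y)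
  have hmain := MeasureTheory.hasSum_integral_of_summable_integral_norm hFint hsum
  have htsum : (fun y => ∑' k, F k y) = fun y : ℝ => (1 + (y:ℂ) * Complex.I) ^ (-((v + 1 : ℝ)) : ℂ) * Complex.exp ((1 + (y:ℂ) * Complex.I) - z / (1 + (y:ℂ) * Complex.I)) := by
    ext y; exact (hsumeq y).tsum_eq
  constructor
  · refine Integrable.mono' ((hbase (v+1) (by linarith)).norm.mul_const (Real.exp |z|)) ?_ (Filter.Eventually.of_forall fun y => ?_)
    · refine ((cpow_cont (v+1)).mul ?_).aestronglyMeasurable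
      apply Complex.continuous_exp.comp
      exact Continuous.sub (by fun_prop) (continuous_const.div (by fun_prop) one_add_I_ne)
    · rw [norm_mul, norm_mul, Complex.exp_sub, norm_div, div_eq_mul_inv, ← norm_inv, ← Complex.exp_neg, mul_assoc]
      gcongr
      rw [Complex.norm_exp]
      apply Real.exp_le_exp.2
      refine (Complex.re_le_norm _).trans ?_
      rw [norm_neg, norm_div, Complex.norm_real, Real.norm_eq_abs]
      exact div_le_self (abs_nonneg _) (hn1 y)
  · rw [htsum] at hmain
    have h2 : HasSum (fun k => ∫ y, F k y) (2 * π * (bPhi v z : ℂ)) := by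
      have h3 : HasSum (fun k : ℕ => (-1 : ℝ) ^ k * (z ^ k / (Nat.factorial k * Real.Gamma ((k : ℝ) + v + 1)))) (bPhi v z) := (bsumm v hv.le z).hasSum
      have h4 := (Complex.hasSum_ofReal.2 h3).mul_left (2 * π : ℂ)
      have h5 : (fun k => ∫ y, F k y) = fun k : ℕ => 2 * (π:ℂ) * (((-1 : ℝ) ^ k * (z ^ k / (Nat.factorial k * Real.Gamma ((k : ℝ) + v + 1))) : ℝ) : ℂ) := by
       funext k
       rw [hF]; simp only
       rw [integral_const_mul, hankel _ (by have : (0:ℝ) ≤ k := Nat.cast_nonneg k; linarith)]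
       push_cast
       ring
      rw [h5]; exact h4
    exact hmain.unique h2

def ctH (v : ℝ) (w : ℂ) : ℂ := Complex.exp ((v:ℂ) * (Complex.sinh w - w))

lemma ct_prim (v : ℝ) : ∃ H : ℂ → ℂ, H 0 = 0 ∧ ∀ w, HasDerivAt H (ctH v w) w := by
  have hd : Differentiable ℂ (ctH v) := by unfold ctH; fun_prop
  obtain ⟨g, h0, hg⟩ := hd.isExactOn_univ.with_val_at 0 0
  exact ⟨g, h0, fun w => hg w (Set.mem_univ _)⟩

lemma ctH_conj (v : ℝ) (w : ℂ) : (starRingEnd ℂ) (ctH v ((starRingEnd ℂ) w)) = ctH v w := by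
  unfold ctH
  rw [← Complex.exp_conj, map_mul, map_sub, ← Complex.sinh_conj]
  simp

lemma ct_conj (v : ℝ) (H : ℂ → ℂ) (h0 : H 0 = 0) (hH : ∀ w, HasDerivAt H (ctH v w) w) (w : ℂ) :
    H ((starRingEnd ℂ) w) = (starRingEnd ℂ) (H w) := by
  have hK : ∀ w, HasDerivAt ((starRingEnd ℂ) ∘ H ∘ (starRingEnd ℂ)) (ctH v w) w := by
    intro w
    rw [hasDerivAt_conj_conj_iff]
    have h := hH ((starRingEnd ℂ) w)
    rw [← ctH_conj v w, Complex.conj_conj]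
    exact h
  have hD : ∀ w, HasDerivAt (fun w => ((starRingEnd ℂ) ∘ H ∘ (starRingEnd ℂ)) w - H w) 0 w := by
    intro w
    have := (hK w).sub (hH w)
    rwa [sub_self] at this
  have hc := is_const_of_deriv_eq_zero (fun w => (hD w).differentiableAt) (fun w => (hD w).deriv) w 0
  simp only [Function.comp, map_zero, h0, sub_zero] at hc
  have := sub_eq_zero.1 hc
  rw [← this, Complex.conj_conj]

def ctW (v y : ℝ) : ℂ := Complex.log (1 + (y:ℂ) * Complex.I) + ((Real.log (2 / v) : ℝ) : ℂ)

lemma ctW_deriv (v y : ℝ) : HasDerivAt (ctW v) (Complex.I / (1 + (y:ℂ) * Complex.I)) y := by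
  unfold ctW
  apply HasDerivAt.add_const
  refine HasDerivAt.clog_real (f := fun y : ℝ => 1 + (y:ℂ) * Complex.I) ?_ (one_add_I_slit y)
  apply HasDerivAt.const_add
  have h : HasDerivAt (fun y : ℝ => (y:ℂ)) 1 y := (hasDerivAt_id (y:ℂ)).comp_ofReal
  have := h.mul_const Complex.I
  rwa [one_mul] at this

lemma ctW_val (v y : ℝ) (hv : 0 < v) : ctH v (ctW v y) * (Complex.I / (1 + (y:ℂ) * Complex.I)) =
    Complex.I * (((v/2)^v : ℝ) : ℂ) * ((1 + (y:ℂ) * Complex.I) ^ (-((v + 1 : ℝ)) : ℂ) * Complex.exp ((1 + (y:ℂ) * Complex.I) - ((v^2/4 : ℝ) : ℂ) / (1 + (y:ℂ) * Complex.I))) := by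
  have hvc : (v : ℂ) ≠ 0 := by exact_mod_cast hv.ne'
  set t : ℂ := 1 + (y:ℂ) * Complex.I with ht
  have h0 : t ≠ 0 := one_add_I_ne y
  have hexp : Complex.exp (ctW v y) = t * (2 / v) := by
    unfold ctW
    rw [Complex.exp_add, Complex.exp_log h0, ← Complex.ofReal_exp, Real.exp_log (by positivity)]
    push_cast; ring
  have hs : (v:ℂ) * Complex.sinh (ctW v y) = t - ((v^2/4 : ℝ) : ℂ) / t := by
    rw [Complex.sinh, Complex.exp_neg, hexp]
    push_cast
    field_simp
    try ring
  have hw : Complex.exp (-(v * ctW v y)) = (((v/2)^v : ℝ) : ℂ) * t ^ (-(v:ℂ)) := by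
    unfold ctW
    rw [mul_add, neg_add, Complex.exp_add, mul_comm]
    congr 1
    · rw [Real.rpow_def_of_pos (by positivity)]
      rw [show v / 2 = (2/v)⁻¹ by field_simp, Real.log_inv]
      push_cast
      ring_nf
    · rw [Complex.cpow_def_of_ne_zero h0, ← ht]
      ring_nf
  have hp : t ^ (-((v + 1 : ℝ)) : ℂ) = t ^ (-(v:ℂ)) * t⁻¹ := by
    rw [show (-((v + 1 : ℝ)) : ℂ) = -(v:ℂ) + (-1) by push_cast; ring, Complex.cpow_add _ _ h0, Complex.cpow_neg_one]
  rw [hp, ctH, mul_sub, sub_eq_add_neg, Complex.exp_add, hs, hw]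
  field_simp

lemma ctW_conj (v y : ℝ) : ctW v (-y) = (starRingEnd ℂ) (ctW v y) := by
  unfold ctW
  rw [map_add, Complex.conj_ofReal, ← Complex.log_conj]
  · congr 2; simp
  · exact (Complex.mem_slitPlane_iff_arg.1 (one_add_I_slit y)).1

lemma ct_limit (v : ℝ) (hv : 0 < v) (H : ℂ → ℂ) (h0 : H 0 = 0) (hH : ∀ w, HasDerivAt H (ctH v w) w) :
    Filter.Tendsto (fun Y : ℝ => (H (ctW v Y)).im) Filter.atTop (nhds (π * ((v/2)^v * bPhi v (v^2/4)))) := by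
  obtain ⟨hi, hTint⟩ := bPhi_hankel v (v^2/4) hv
  have hT := (intervalIntegral_tendsto_integral hi Filter.tendsto_neg_atTop_atBot Filter.tendsto_id).const_mul (Complex.I * (((v/2)^v : ℝ) : ℂ))
  rw [hTint] at hT
  have hE : ∀ Y : ℝ, (Complex.I * (((v/2)^v : ℝ) : ℂ)) * (∫ y in (-Y)..(id Y), ((1 + (y:ℂ) * Complex.I) ^ (-((v + 1 : ℝ)) : ℂ) * Complex.exp ((1 + (y:ℂ) * Complex.I) - ((v^2/4 : ℝ) : ℂ) / (1 + (y:ℂ) * Complex.I)))) = 2 * Complex.I * ((H (ctW v Y)).im : ℂ) := by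
    intro Y
    rw [← intervalIntegral.integral_const_mul, intervalIntegral.integral_eq_sub_of_hasDerivAt (f := fun y => H (ctW v y))]
    · simp only [id]
      rw [ctW_conj, ct_conj v H h0 hH]
      rw [Complex.sub_conj]; push_cast; ring
    · intro y _
      rw [← ctW_val v y hv]
      exact (hH (ctW v y)).comp_of_eq y (ctW_deriv v y) rfl
    · exact (hi.const_mul _).intervalIntegrable
  simp_rw [hE] at hT
  have h2 := (Complex.continuous_im.tendsto _).comp (hT.const_mul (1/2 : ℂ))
  convert h2 using 1
  · ext Y; simp
  · congr 1
    rw [show (1/2 : ℂ) * (Complex.I * (((v/2)^v : ℝ) : ℂ) * (2 * π * (bPhi v (v^2/4) : ℂ))) = ((π * ((v/2)^v * bPhi v (v^2/4)) : ℝ) : ℂ) * Complex.I by push_cast; ring]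
    rw [Complex.im_ofReal_mul, Complex.I_im, mul_one]

def spR (θ : ℝ) : ℝ := Real.arcosh ((Real.sinc θ)⁻¹)
def spF (θ : ℝ) : ℝ := spR θ - Real.sinh (spR θ) * Real.cos θ
def spP (θ : ℝ) : ℂ := (spR θ : ℂ) + (θ : ℂ) * Complex.I

lemma sp_sinc_pos (θ : ℝ) (h : θ ∈ Set.Ico 0 π) : 0 < Real.sinc θ := by
  rcases eq_or_lt_of_le h.1 with h0 | h0
  · rw [← h0]; simp
  · rw [Real.sinc_of_ne_zero h0.ne']
    exact div_pos (Real.sin_pos_of_pos_of_lt_pi h0 h.2) h0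

lemma sp_one_le (θ : ℝ) (h : θ ∈ Set.Ico 0 π) : 1 ≤ (Real.sinc θ)⁻¹ :=
  (one_le_inv₀ (sp_sinc_pos θ h)).2 (Real.sinc_le_one θ)

lemma spR_cont : ContinuousOn spR (Set.Ico 0 π) := by
  unfold spR
  refine Real.continuousOn_arcosh.comp ?_ (fun θ h => sp_one_le θ h)
  exact Real.continuous_sinc.continuousOn.inv₀ (fun θ h => (sp_sinc_pos θ h).ne')

lemma spF_cont : ContinuousOn spF (Set.Ico 0 π) := by
  unfold spF
  exact spR_cont.sub ((Real.continuous_sinh.comp_continuousOn spR_cont).mul Real.continuous_cos.continuousOn)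

lemma spP_cont : ContinuousOn spP (Set.Ico 0 π) := by
  unfold spP
  exact (Complex.continuous_ofReal.comp_continuousOn spR_cont).add (by fun_prop)

lemma spR_zero : spR 0 = 0 := by simp [spR]
lemma spF_zero : spF 0 = 0 := by simp [spF, spR_zero]
lemma spP_zero : spP 0 = 0 := by simp [spP, spR_zero]

lemma spR_nonneg (θ : ℝ) (h : θ ∈ Set.Ico 0 π) : 0 ≤ spR θ := Real.arcosh_nonneg (sp_one_le θ h)

lemma sp_cosh (θ : ℝ) (h : θ ∈ Set.Ico 0 π) : Real.cosh (spR θ) * Real.sin θ = θ := by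
  unfold spR
  rw [Real.cosh_arcosh (sp_one_le θ h)]
  rcases eq_or_lt_of_le h.1 with h0 | h0
  · rw [← h0]; simp
  · rw [Real.sinc_of_ne_zero h0.ne']
    have := Real.sin_pos_of_pos_of_lt_pi h0 h.2
    field_simp

lemma sp_val (v θ : ℝ) (h : θ ∈ Set.Ico 0 π) : ctH v (spP θ) = ((Real.exp (-(v * spF θ)) : ℝ) : ℂ) := by
  unfold ctH
  rw [Complex.ofReal_exp]
  congr 1
  unfold spP spF
  rw [Complex.sinh_add, Complex.sinh_mul_I, Complex.cosh_mul_I]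
  have hc : Complex.cosh (spR θ : ℂ) * Complex.sin θ = θ := by
    rw [← Complex.ofReal_cosh, ← Complex.ofReal_sin, ← Complex.ofReal_mul, sp_cosh θ h]
  rw [← mul_assoc, hc]
  push_cast
  ring

lemma spR_deriv (θ : ℝ) (h : θ ∈ Set.Ioo 0 π) :
    HasDerivAt spR ((√((θ / Real.sin θ) ^ 2 - 1))⁻¹ * ((Real.sin θ - θ * Real.cos θ) / Real.sin θ ^ 2)) θ := by
  have hs := Real.sin_pos_of_pos_of_lt_pi h.1 h.2
  have hlt := Real.sin_lt h.1
  have h1 : HasDerivAt (fun θ => θ / Real.sin θ) ((Real.sin θ - θ * Real.cos θ) / Real.sin θ ^ 2) θ := by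
    have := (hasDerivAt_id θ).div (Real.hasDerivAt_sin θ) hs.ne'
    simp only [id, one_mul] at this
    exact this
  have hgt : θ / Real.sin θ ∈ Set.Ioi 1 := (one_lt_div hs).2 hlt
  have h2 := (Real.hasDerivAt_arcosh hgt).comp θ h1
  refine h2.congr_of_eventuallyEq ?_
  filter_upwards [isOpen_Ioi.mem_nhds h.1] with x hx
  have hx0 : x ≠ 0 := (show (0:ℝ) < x from hx).ne'
  simp [spR, Real.sinc_of_ne_zero hx0]

lemma sp_sinh (θ : ℝ) (h : θ ∈ Set.Ioo 0 π) : Real.sinh (spR θ) = √((θ / Real.sin θ) ^ 2 - 1) := by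
  unfold spR
  rw [Real.sinh_arcosh (sp_one_le θ ⟨h.1.le, h.2⟩), Real.sinc_of_ne_zero h.1.ne', inv_div]

lemma spF_deriv (θ : ℝ) (h : θ ∈ Set.Ioo 0 π) :
    HasDerivAt spF ((θ - Real.sin θ * Real.cos θ) ^ 2 / (Real.sin θ ^ 3 * √((θ / Real.sin θ) ^ 2 - 1))) θ := by
  have hs := Real.sin_pos_of_pos_of_lt_pi h.1 h.2
  have hlt := Real.sin_lt h.1
  have hgt : 1 < θ / Real.sin θ := (one_lt_div hs).2 hlt
  have hr := spR_deriv θ h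
  have hF := hr.sub (hr.sinh.mul (Real.hasDerivAt_cos θ))
  have hpos : 0 < (θ / Real.sin θ) ^ 2 - 1 := by nlinarith
  have hsq := Real.sq_sqrt hpos.le
  have hS : 0 < √((θ / Real.sin θ) ^ 2 - 1) := Real.sqrt_pos.2 hpos
  have hcosh : Real.cosh (spR θ) = θ / Real.sin θ := by
    rw [eq_div_iff hs.ne', sp_cosh θ ⟨h.1.le, h.2⟩]
  rw [hcosh, sp_sinh θ h] at hF
  set S := √((θ / Real.sin θ) ^ 2 - 1) with hSd
  have hsq2 : S ^ 2 * Real.sin θ ^ 2 = θ ^ 2 - Real.sin θ ^ 2 := by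
    rw [hsq]; field_simp
  have hF' : HasDerivAt spF _ θ := hF
  convert hF' using 1
  have hsc := Real.sin_sq_add_cos_sq θ
  field_simp
  rw [show S ^ 2 = (θ ^ 2 - Real.sin θ ^ 2) / Real.sin θ ^ 2 by rw [← hsq2]; field_simp]
  field_simp
  linear_combination (Real.sin θ ^ 2 - θ ^ 2) * hsc

lemma sp_G (v : ℝ) (H : ℂ → ℂ) (h0 : H 0 = 0) (hH : ∀ w, HasDerivAt H (ctH v w) w) (θ : ℝ) (hθ : θ ∈ Set.Ico 0 π) :
    ∫ x in (0:ℝ)..θ, Real.exp (-(v * spF x)) = (H (spP θ)).im := by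
  have hsub : Set.Icc 0 θ ⊆ Set.Ico 0 π := fun x hx => ⟨hx.1, lt_of_le_of_lt hx.2 hθ.2⟩
  have hHc : Continuous H := continuous_iff_continuousAt.2 fun w => (hH w).continuousAt
  have h := intervalIntegral.integral_eq_sub_of_hasDerivAt_of_le (f := fun x => (H (spP x)).im) (f' := fun x => Real.exp (-(v * spF x))) hθ.1 ?_ ?_ ?_
  · rw [h, spP_zero, h0]; simp
  · exact (Complex.continuous_im.comp hHc).comp_continuousOn (spP_cont.mono hsub)
  · intro x hx
    have hx' : x ∈ Set.Ioo 0 π := ⟨hx.1, hx.2.trans hθ.2⟩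
    have hr := spR_deriv x hx'
    have hI : HasDerivAt (fun y : ℝ => (y:ℂ) * Complex.I) Complex.I x := by
      have h : HasDerivAt (fun y : ℝ => (y:ℂ)) 1 x := (hasDerivAt_id (x:ℂ)).comp_ofReal
      have := h.mul_const Complex.I
      rwa [one_mul] at this
    have hP : HasDerivAt spP _ x := hr.ofReal_comp.add hI
    have hHP := (hH (spP x)).comp_of_eq x hP rfl
    rw [sp_val v x ⟨hx'.1.le, hx'.2⟩] at hHP
    have := (Complex.imCLM.hasFDerivAt.comp_hasDerivAt x hHP)
    have h2 : HasDerivAt (fun x => (H (spP x)).im) _ x := this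
    refine h2.congr_deriv ?_
    change Complex.im _ = _
    rw [Complex.im_ofReal_mul, Complex.add_im, Complex.ofReal_im, Complex.I_im]
    ring
  · apply ContinuousOn.intervalIntegrable
    rw [Set.uIcc_of_le hθ.1]
    exact Real.continuous_exp.comp_continuousOn ((continuousOn_const.mul (spF_cont.mono hsub)).neg)

lemma sp_mono (v : ℝ) (a b : ℝ) (ha : 0 ≤ a) (hab : a ≤ b) (hb : b < π) :
    ∫ x in (0:ℝ)..a, Real.exp (-(v * spF x)) ≤ ∫ x in (0:ℝ)..b, Real.exp (-(v * spF x)) := by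
  have hc : ∀ c d, 0 ≤ c → c ≤ d → d ≤ b → IntervalIntegrable (fun x => Real.exp (-(v * spF x))) volume c d := by
    intro c d h0 h1 h2
    apply ContinuousOn.intervalIntegrable
    rw [Set.uIcc_of_le h1]
    exact Real.continuous_exp.comp_continuousOn ((continuousOn_const.mul (spF_cont.mono fun x hx => ⟨h0.trans hx.1, by linarith [hx.2]⟩)).neg)
  rw [← intervalIntegral.integral_add_adjacent_intervals (hc 0 a le_rfl ha hab) (hc a b ha hab le_rfl)]
  have : 0 ≤ ∫ x in a..b, Real.exp (-(v * spF x)) := intervalIntegral.integral_nonneg hab fun x _ => (Real.exp_pos _).le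
  linarith

/-- comparison of the steepest descent end point with the Hankel contour -/
lemma sp_seg (v : ℝ) (hv : 0 < v) (H : ℂ → ℂ) (hH : ∀ w, HasDerivAt H (ctH v w) w) (r θ Y : ℝ)
    (hr : 0 ≤ r) (hθ : θ ∈ Set.Ioo (π/2) π) (hY : 0 ≤ Y) (hrY : 1 + Y ^ 2 = (v * Real.exp r / 2) ^ 2) :
    (H ((r:ℂ) + (θ:ℂ) * Complex.I)).im ≤ (H (ctW v Y)).im + Real.exp (1 - v * r) * π := by
  have hn : ‖(1 + (Y:ℂ) * Complex.I)‖ = v * Real.exp r / 2 := by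
    rw [norm_one_add_I, hrY, ← Real.sqrt_eq_rpow, Real.sqrt_sq (by positivity)]
  set φ := (1 + (Y:ℂ) * Complex.I).arg with hφ
  have hφ0 : 0 ≤ φ := Complex.arg_nonneg_iff.2 (by simpa using hY)
  have hφ1 : φ < π / 2 := lt_of_le_of_lt (le_abs_self _) (Complex.abs_arg_lt_pi_div_two_iff.2 (Or.inl (by simp)))
  have hcos : Real.cos φ = 1 / (v * Real.exp r / 2) := by
    rw [hφ, Complex.cos_arg (one_add_I_ne Y), hn]; simp
  have hW : ctW v Y = (r:ℂ) + (φ:ℂ) * Complex.I := by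
    unfold ctW
    rw [Complex.log, hn]
    have : Real.log (v * Real.exp r / 2) + Real.log (2 / v) = r := by
      rw [← Real.log_mul (by positivity) (by positivity)]
      rw [show v * Real.exp r / 2 * (2 / v) = Real.exp r by field_simp, Real.log_exp]
    rw [← hφ]
    conv_rhs => rw [← this]
    push_cast; ring
  rw [hW]
  have hd : ∀ x ∈ Set.Icc φ θ, HasDerivWithinAt (fun x : ℝ => H ((r:ℂ) + (x:ℂ) * Complex.I)) (ctH v ((r:ℂ) + (x:ℂ) * Complex.I) * Complex.I) (Set.Icc φ θ) x := by
    intro x _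
    have hI : HasDerivAt (fun y : ℝ => (r:ℂ) + (y:ℂ) * Complex.I) Complex.I x := by
      have h : HasDerivAt (fun y : ℝ => (y:ℂ)) 1 x := (hasDerivAt_id (x:ℂ)).comp_ofReal
      have := h.mul_const Complex.I
      rw [one_mul] at this
      exact this.const_add _
    exact ((hH _).comp_of_eq x hI rfl).hasDerivWithinAt
  have hb : ∀ x ∈ Set.Icc φ θ, ‖ctH v ((r:ℂ) + (x:ℂ) * Complex.I) * Complex.I‖ ≤ Real.exp (1 - v * r) := by
    intro x hx
    rw [norm_mul, Complex.norm_I, mul_one, ctH, Complex.norm_exp]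
    apply Real.exp_le_exp.2
    rw [Complex.re_ofReal_mul, Complex.sinh_add, Complex.sinh_mul_I, Complex.cosh_mul_I]
    have e : (Complex.sinh r * Complex.cos x + Complex.cosh r * (Complex.sin x * Complex.I) - (r + x * Complex.I)).re = Real.sinh r * Real.cos x - r := by
      rw [← Complex.ofReal_sinh, ← Complex.ofReal_cos, ← Complex.ofReal_cosh, ← Complex.ofReal_sin]
      simp
      rw [← Complex.ofReal_sinh, ← Complex.ofReal_cos, Complex.ofReal_re, Complex.ofReal_re]
    rw [e]
    have h1 : Real.cos x ≤ Real.cos φ := Real.cos_le_cos_of_nonneg_of_le_pi hφ0 (by linarith [hx.2, hθ.2]) hx.1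
    have h2 : 0 ≤ Real.sinh r := Real.sinh_nonneg_iff.2 hr
    have h3 : Real.sinh r ≤ Real.exp r / 2 := by
      rw [Real.sinh_eq]; linarith [Real.exp_pos (-r)]
    have h4 : 0 ≤ Real.cos φ := by rw [hcos]; positivity
    have h5 : v * (Real.sinh r * Real.cos x) ≤ 1 := by
      calc v * (Real.sinh r * Real.cos x) ≤ v * (Real.sinh r * Real.cos φ) := by gcongr
        _ ≤ v * (Real.exp r / 2 * Real.cos φ) := by gcongr
        _ = 1 := by rw [hcos]; field_simp
    linarith
  have hφθ : φ ≤ θ := by linarith [hθ.1]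
  have key := Convex.norm_image_sub_le_of_norm_hasDerivWithin_le hd hb (convex_Icc φ θ) (Set.left_mem_Icc.2 hφθ) (Set.right_mem_Icc.2 hφθ)
  have h6 := (Complex.abs_im_le_norm _).trans key
  rw [Complex.sub_im] at h6
  have h7 := (le_abs_self _).trans h6
  have h8 : ‖θ - φ‖ ≤ π := by
    rw [Real.norm_of_nonneg (by linarith)]; linarith [hθ.2]
  have h9 : Real.exp (1 - v * r) * ‖θ - φ‖ ≤ Real.exp (1 - v * r) * π := by gcongr
  linarith

lemma spR_tendsto : Filter.Tendsto spR (nhdsWithin π (Set.Iio π)) Filter.atTop := by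
  have h1 : Filter.Tendsto (fun θ => θ / Real.sin θ) (nhdsWithin π (Set.Iio π)) Filter.atTop := by
    have hs : Filter.Tendsto Real.sin (nhdsWithin π (Set.Iio π)) (nhdsWithin 0 (Set.Ioi 0)) := by
      refine tendsto_nhdsWithin_iff.2 ⟨?_, ?_⟩
      · have := (Real.continuous_sin.tendsto π).mono_left (nhdsWithin_le_nhds (s := Set.Iio π))
        rwa [Real.sin_pi] at this
      · filter_upwards [Ioo_mem_nhdsLT Real.pi_pos] with x hx
        exact Real.sin_pos_of_pos_of_lt_pi hx.1 hx.2
    have hi := hs.inv_tendsto_nhdsGT_zero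
    have hid : Filter.Tendsto (fun x : ℝ => x) (nhdsWithin π (Set.Iio π)) (nhds π) := nhdsWithin_le_nhds
    exact hid.pos_mul_atTop Real.pi_pos hi
  have h2 := Real.tendsto_log_atTop.comp h1
  refine Filter.tendsto_atTop_mono' _ ?_ h2
  filter_upwards [Ioo_mem_nhdsLT Real.pi_pos] with x hx
  have hs := Real.sin_pos_of_pos_of_lt_pi hx.1 hx.2
  have hc : Real.cosh (spR x) = x / Real.sin x := by
    rw [eq_div_iff hs.ne', sp_cosh x ⟨hx.1.le, hx.2⟩]
  have hr := spR_nonneg x ⟨hx.1.le, hx.2⟩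
  simp only [Function.comp]
  rw [← hc, Real.log_le_iff_le_exp (Real.cosh_pos _), Real.cosh_eq]
  have : Real.exp (-spR x) ≤ Real.exp (spR x) := Real.exp_le_exp.2 (by linarith)
  linarith

lemma sp_main (v : ℝ) (hv : 0 < v) (θ0 : ℝ) (h0 : 0 ≤ θ0) (h1 : θ0 < π) :
    ∫ x in (0:ℝ)..θ0, Real.exp (-(v * spF x)) ≤ π * ((v/2)^v * bPhi v (v^2/4)) := by
  obtain ⟨H, hH0, hH⟩ := ct_prim v
  have hL := ct_limit v hv H hH0 hH
  set Yf : ℝ → ℝ := fun θ => √((v * Real.exp (spR θ) / 2) ^ 2 - 1) with hYf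
  have hA : Filter.Tendsto (fun θ => v * Real.exp (spR θ) / 2) (nhdsWithin π (Set.Iio π)) Filter.atTop :=
    ((Real.tendsto_exp_atTop.comp spR_tendsto).const_mul_atTop hv).atTop_div_const two_pos
  have hYt : Filter.Tendsto Yf (nhdsWithin π (Set.Iio π)) Filter.atTop := by
    apply Real.tendsto_sqrt_atTop.comp
    exact Filter.tendsto_atTop_add_const_right _ (-1) ((Filter.tendsto_pow_atTop two_ne_zero).comp hA)
  have hE : Filter.Tendsto (fun θ => Real.exp (1 - v * spR θ) * π) (nhdsWithin π (Set.Iio π)) (nhds (0 * π)) := by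
    apply Filter.Tendsto.mul_const
    apply Real.tendsto_exp_atBot.comp
    have := (spR_tendsto.const_mul_atTop hv)
    exact Filter.tendsto_atBot_add_const_left _ 1 (Filter.tendsto_neg_atTop_atBot.comp this)
  have hT := (hL.comp hYt).add hE
  rw [zero_mul, add_zero] at hT
  refine ge_of_tendsto hT ?_
  filter_upwards [Ioo_mem_nhdsLT (show max (π/2) θ0 < π from max_lt (by linarith [Real.pi_pos]) h1), hA.eventually_ge_atTop 1] with θ hθ hA1
  have hm : π / 2 < θ := lt_of_le_of_lt (le_max_left _ _) hθ.1
  have hm2 : θ0 < θ := lt_of_le_of_lt (le_max_right _ _) hθ.1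
  have hθ' : θ ∈ Set.Ico 0 π := ⟨by linarith [Real.pi_pos], hθ.2⟩
  refine (sp_mono v θ0 θ h0 hm2.le hθ.2).trans ?_
  rw [sp_G v H hH0 hH θ hθ']
  refine sp_seg v hv H hH (spR θ) θ (Yf θ) (spR_nonneg θ hθ') ⟨hm, hθ.2⟩ (Real.sqrt_nonneg _) ?_
  rw [hYf]; simp only
  rw [Real.sq_sqrt (by nlinarith)]
  ring

lemma trig_taylor (n : ℕ) : ∀ x : ℝ, 0 ≤ x →
    0 ≤ (-1 : ℝ) ^ (n+1) * (Real.cos x - ∑ k ∈ Finset.range (n+1), (-1 : ℝ) ^ k * x ^ (2*k) / (Nat.factorial (2*k))) ∧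
    0 ≤ (-1 : ℝ) ^ (n+1) * (Real.sin x - ∑ k ∈ Finset.range (n+1), (-1 : ℝ) ^ k * x ^ (2*k+1) / (Nat.factorial (2*k+1))) := by
  have sder : ∀ (m : ℕ) (x : ℝ), HasDerivAt (fun x : ℝ => ∑ k ∈ Finset.range m, (-1 : ℝ) ^ k * x ^ (2*k+1) / (Nat.factorial (2*k+1))) (∑ k ∈ Finset.range m, (-1 : ℝ) ^ k * x ^ (2*k) / (Nat.factorial (2*k))) x := by
    intro m x
    apply HasDerivAt.fun_sum
    intro k _
    have h := ((hasDerivAt_pow (2*k+1) x).const_mul ((-1 : ℝ) ^ k)).div_const (Nat.factorial (2*k+1) : ℝ)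
    refine h.congr_deriv ?_
    rw [Nat.factorial_succ]
    have : (Nat.factorial (2*k) : ℝ) ≠ 0 := by positivity
    push_cast
    field_simp
  have cder : ∀ (m : ℕ) (x : ℝ), HasDerivAt (fun x : ℝ => ∑ k ∈ Finset.range (m+1), (-1 : ℝ) ^ k * x ^ (2*k) / (Nat.factorial (2*k))) (-∑ k ∈ Finset.range m, (-1 : ℝ) ^ k * x ^ (2*k+1) / (Nat.factorial (2*k+1))) x := by
    intro m x
    simp_rw [Finset.sum_range_succ' _ m]
    rw [← Finset.sum_neg_distrib]
    have hs : HasDerivAt (fun x : ℝ => ∑ k ∈ Finset.range m, (-1 : ℝ) ^ (k+1) * x ^ (2*(k+1)) / (Nat.factorial (2*(k+1)))) (∑ k ∈ Finset.range m, -((-1 : ℝ) ^ k * x ^ (2*k+1) / (Nat.factorial (2*k+1)))) x := by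
      apply HasDerivAt.fun_sum
      intro k _
      have h := ((hasDerivAt_pow (2*(k+1)) x).const_mul ((-1 : ℝ) ^ (k+1))).div_const (Nat.factorial (2*(k+1)) : ℝ)
      refine h.congr_deriv ?_
      rw [show 2 * (k+1) = (2*k+1) + 1 by ring, Nat.factorial_succ (2*k+1), Nat.add_sub_cancel]
      have : (Nat.factorial (2*k+1) : ℝ) ≠ 0 := by positivity
      push_cast
      field_simp
      ring
    simpa using hs.add_const (1:ℝ)
  have mono : ∀ (f f' : ℝ → ℝ), (∀ x, HasDerivAt f (f' x) x) → (∀ x, 0 ≤ x → 0 ≤ f' x) → f 0 = 0 → ∀ x, 0 ≤ x → 0 ≤ f x := by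
    intro f f' hd hp h0 x hx
    have hm : MonotoneOn f (Set.Ici 0) := by
      apply monotoneOn_of_deriv_nonneg (convex_Ici 0)
      · exact fun x _ => (hd x).continuousAt.continuousWithinAt
      · exact fun x _ => (hd x).differentiableAt.differentiableWithinAt
      · intro x hx
        rw [interior_Ici] at hx
        rw [(hd x).deriv]; exact hp x (le_of_lt hx)
    rw [← h0]; exact hm (Set.mem_Ici.2 le_rfl) hx hx
  have stepS : ∀ m : ℕ, (∀ x : ℝ, 0 ≤ x → 0 ≤ (-1 : ℝ) ^ m * (Real.cos x - ∑ k ∈ Finset.range m, (-1 : ℝ) ^ k * x ^ (2*k) / (Nat.factorial (2*k)))) →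
     ∀ x : ℝ, 0 ≤ x → 0 ≤ (-1 : ℝ) ^ m * (Real.sin x - ∑ k ∈ Finset.range m, (-1 : ℝ) ^ k * x ^ (2*k+1) / (Nat.factorial (2*k+1))) := by
    intro m hc
    refine mono _ _ (fun x => ((Real.hasDerivAt_sin x).sub (sder m x)).const_mul _) hc ?_
    simp
  induction n with
  | zero =>
    have h1 : ∀ x : ℝ, 0 ≤ x → 0 ≤ (-1 : ℝ) ^ 1 * (Real.cos x - ∑ k ∈ Finset.range 1, (-1 : ℝ) ^ k * x ^ (2*k) / (Nat.factorial (2*k))) := by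
      intro x _
      simp [Real.cos_le_one]
    exact fun x hx => ⟨h1 x hx, stepS 1 h1 x hx⟩
  | succ n ih =>
    have h1 : ∀ x : ℝ, 0 ≤ x → 0 ≤ (-1 : ℝ) ^ (n+1+1) * (Real.cos x - ∑ k ∈ Finset.range (n+1+1), (-1 : ℝ) ^ k * x ^ (2*k) / (Nat.factorial (2*k))) := by
      refine mono _ (fun x => (-1 : ℝ) ^ (n+1) * (Real.sin x - ∑ k ∈ Finset.range (n+1), (-1 : ℝ) ^ k * x ^ (2*k+1) / (Nat.factorial (2*k+1)))) (fun x => ?_) (fun x hx => (ih x hx).2) ?_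
      · refine (((Real.hasDerivAt_cos x).sub (cder (n+1) x)).const_mul ((-1 : ℝ) ^ (n+1+1))).congr_deriv ?_
        rw [pow_succ (-1 : ℝ) (n+1)]
        ring
      · rw [Finset.sum_range_succ']
        simp
    exact fun x hx => ⟨h1 x hx, stepS _ h1 x hx⟩

def dTp (q : ℝ) : ℝ := (1) * q ^ 0 + (-1/5) * q ^ 1 + (2/105) * q ^ 2 + (-1/945) * q ^ 3 + (2/51975) * q ^ 4 + (-2/2027025) * q ^ 5 + (4/212837625) * q ^ 6
def sTp (q : ℝ) : ℝ := (1) * q ^ 0 + (-1/3) * q ^ 1 + (2/45) * q ^ 2 + (-1/315) * q ^ 3 + (2/14175) * q ^ 4 + (-2/467775) * q ^ 5 + (4/42567525) * q ^ 6 + (-1/638512875) * q ^ 7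
def eTp (q : ℝ) : ℝ := (1) * q ^ 0 + (-2/15) * q ^ 1 + (1/105) * q ^ 2 + (-2/4725) * q ^ 3 + (2/155925) * q ^ 4 + (-4/14189175) * q ^ 5
def lTp (q : ℝ) : ℝ := (1) * q ^ 0 + (-1/15) * q ^ 1 + (11/5000) * q ^ 2

lemma dT_bound (t : ℝ) (ht : 0 ≤ t) : t - Real.sin t * Real.cos t ≤ 2 / 3 * t ^ 3 * dTp (t ^ 2) := by
  have h := (trig_taylor 7 (2*t) (by linarith)).2
  rw [Real.sin_two_mul] at h
  norm_num [Finset.sum_range_succ, Nat.factorial] at h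
  unfold dTp
  nlinarith [h]

lemma sT_bound (t : ℝ) (ht : 0 ≤ t) : t ^ 2 * sTp (t ^ 2) ≤ Real.sin t ^ 2 := by
  have h := (trig_taylor 8 (2*t) (by linarith)).1
  rw [Real.cos_two_mul, Real.cos_sq'] at h
  norm_num [Finset.sum_range_succ, Nat.factorial] at h
  unfold sTp
  nlinarith [h]

lemma eT_bound (t : ℝ) (ht : 0 ≤ t) : t ^ 4 / 3 * eTp (t ^ 2) ≤ t ^ 2 - Real.sin t ^ 2 := by
  have h := (trig_taylor 7 (2*t) (by linarith)).1
  rw [Real.cos_two_mul, Real.cos_sq'] at h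
  norm_num [Finset.sum_range_succ, Nat.factorial] at h
  unfold eTp
  nlinarith [h]

lemma lT_pos (q : ℝ) : 0 < lTp q := by
  unfold lTp
  nlinarith [sq_nonneg (q - 15)]

lemma lT_sq (q : ℝ) (h0 : 0 ≤ q) (h1 : q ≤ 5.62) : lTp q ^ 2 ≤ eTp q := by
  have h2 : eTp q - lTp q ^ 2 = q ^ 2 * ((1/105 - 1/225 - 11/2500) + (-2/4725 + 11/37500) * q + q ^ 2 * ((2/155925 - 121/25000000) - 4/14189175 * q)) := by
    unfold lTp eTp
    ring
  have h3 : 0 ≤ q ^ 2 * (((2/155925 - 121/25000000) - 4/14189175 * q) - 6.4/1000000) := by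
    apply mul_nonneg (sq_nonneg _)
    norm_num at h1 ⊢
    linarith
  have h4 : 0 ≤ (1/105 - 1/225 - 11/2500) + (-2/4725 + 11/37500) * q + q ^ 2 * ((2/155925 - 121/25000000) - 4/14189175 * q) := by
    nlinarith [sq_nonneg (q - 10.15)]
  have h5 := mul_nonneg (sq_nonneg q) h4
  rw [← h2] at h5
  linarith

lemma main_poly (t : ℝ) (h0 : 0 ≤ t) (h1 : t ≤ 2.37) :
    dTp (t ^ 2) ^ 2 ≤ sTp (t ^ 2) * lTp (t ^ 2) * (1 + 0.01 * t ^ 3 + 0.0039 * t ^ 6) := by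
  obtain ⟨s, hs, hs0⟩ : ∃ s, s = 237/100 - t ∧ 0 ≤ s := ⟨_, rfl, by linarith⟩
  have key : sTp (t ^ 2) * lTp (t ^ 2) * (1 + 0.01 * t ^ 3 + 0.0039 * t ^ 6) - dTp (t ^ 2) ^ 2 = t ^ 3 * ((10000000000000000000000000000000000000000/74082437997036831849997331913054517295900587875837) * (t ^ 0 * s ^ 21) +
      (16258000000000000000000000000000000000000/6402185999743923740123226214708415074954371791739) * (t ^ 1 * s ^ 20) +
      (3826895600000000000000000000000000000000000/172859021993085940983327107797127207023768038376953) * (t ^ 2 * s ^ 19) +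
      (20550926520500000000000000000000000000000000/172859021993085940983327107797127207023768038376953) * (t ^ 3 * s ^ 18) +
      (25446488805142660000000000000000000000000000/57619673997695313661109035932375735674589346125651) * (t ^ 4 * s ^ 17) +
      (16125077461349275336000000000000000000000000000/13310144693467617455716187300378794940830138955025381) * (t ^ 5 * s ^ 16) +
      (34230131515630303591742000000000000000000000000/13310144693467617455716187300378794940830138955025381) * (t ^ 6 * s ^ 15) +
      (36299975537387168140708654600000000000000000000/8239613381670429853538592138329730201466276495968093) * (t ^ 7 * s ^ 14) +
      (157157223220720965935900937440000000000000000000/24718840145011289560615776414989190604398829487904279) * (t ^ 8 * s ^ 13) +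
      (4175144425807856303147628823050460000000000000000/519095643045237080772931304714773002692375419245989859) * (t ^ 9 * s ^ 12) +
      (525888007148207427888246035552804000000000000000/57677293671693008974770144968308111410263935471776651) * (t ^ 10 * s ^ 11) +
      (530377150076686441488047544864262095200000000000/57677293671693008974770144968308111410263935471776651) * (t ^ 11 * s ^ 10) +
      (198068125087119646660912612881844662560000000000/24718840145011289560615776414989190604398829487904279) * (t ^ 12 * s ^ 9) +
      (25879874995586972251181362545188191150743160000000/4441151612720361691057301162559724578590323031326802127) * (t ^ 13 * s ^ 8) +
      (45708907110178865950026389487749039527662128000000/13323454838161085073171903487679173735770969093980406381) * (t ^ 14 * s ^ 7) +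
      (21215388107988586455693627423715659219382860452800/13323454838161085073171903487679173735770969093980406381) * (t ^ 15 * s ^ 6) +
      (2518296542705391027166040530309427075094927852800/4441151612720361691057301162559724578590323031326802127) * (t ^ 16 * s ^ 5) +
      (648242595543950121712574972126472034128093695954212/4330122822402352648780868633495731464125564955543632073825) * (t ^ 17 * s ^ 4) +
      (1809576697060048991044319873235515787131967107375498/64951842336035289731713029502435971961883474333154481107375) * (t ^ 18 * s ^ 3) +
      (6059988124949988545462497597829143337378991083042441/1804217842667646936992028597289888110052318731476513364093750) * (t ^ 19 * s ^ 2) +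
      (601529368992970243967783372169500029694950062720073/2706326764001470405488042895934832165078478097214770046140625) * (t ^ 20 * s ^ 1) +
      (39299418709473824972933996746374836920860819804808367147/7577714939204117135366520108617530062219738672201356129193750000000) * (t ^ 21 * s ^ 0)) := by
    rw [hs]
    unfold dTp sTp lTp
    ring
  have : 0 ≤ sTp (t ^ 2) * lTp (t ^ 2) * (1 + 0.01 * t ^ 3 + 0.0039 * t ^ 6) - dTp (t ^ 2) ^ 2 := by
    rw [key]; positivity
  linarith

lemma spF_deriv_le (t : ℝ) (h0 : 0 < t) (h1 : t < 2.37) :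
    (t - sin t * cos t)^2 / (sin t ^3 * √((t / sin t)^2 - 1)) ≤
      4 / (9 * √3) * (3 * t ^ 2 + 0.03 * t ^ 5 + 0.0117 * t ^ 8) := by
  have hpi : t < π := by have := Real.pi_gt_d2; norm_num at h1; linarith
  have hs : 0 < sin t := Real.sin_pos_of_pos_of_lt_pi h0 hpi
  have hq0 : 0 ≤ t ^ 2 := by positivity
  have hq1 : t ^ 2 ≤ 5.62 := by norm_num at h1 ⊢; nlinarith
  have hd := dT_bound t h0.le
  have hsT := sT_bound t h0.le
  have heT := eT_bound t h0.le
  have hl := lT_sq (t ^ 2) hq0 hq1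
  have hlp := lT_pos (t ^ 2)
  have hm := main_poly t h0.le h1.le
  have h3 : (0:ℝ) < √3 := by positivity
  have h33 : √3 ^ 2 = (3:ℝ) := Real.sq_sqrt (by norm_num)
  have hD0 : 0 ≤ t - sin t * cos t := by
    have := Real.sin_le h0.le
    have := Real.cos_le_one t
    nlinarith
  have hsS : t ^ 2 / √3 * lTp (t ^ 2) ≤ sin t * √((t / sin t)^2 - 1) := by
    have e : sin t * √((t / sin t)^2 - 1) = √(t ^ 2 - sin t ^ 2) := by
      have : t ^ 2 - sin t ^ 2 = sin t ^ 2 * ((t / sin t) ^ 2 - 1) := by field_simp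
      rw [this, Real.sqrt_mul (sq_nonneg _), Real.sqrt_sq hs.le]
    rw [e]
    apply Real.le_sqrt_of_sq_le
    have : (t ^ 2 / √3 * lTp (t ^ 2)) ^ 2 = t ^ 4 / 3 * lTp (t ^ 2) ^ 2 := by
      rw [mul_pow, div_pow, h33]; ring
    rw [this]
    refine le_trans ?_ heT
    gcongr
  have hden : 0 < t ^ 2 / √3 * lTp (t ^ 2) := by positivity
  have hD : (t - sin t * cos t) ^ 2 ≤ 4 / 9 * t ^ 6 * dTp (t ^ 2) ^ 2 := by
    have := pow_le_pow_left₀ hD0 hd 2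
    calc _ ≤ _ := this
      _ = _ := by ring
  rw [show sin t ^ 3 * √((t / sin t)^2 - 1) = sin t ^ 2 * (sin t * √((t / sin t)^2 - 1)) by ring]
  rw [div_le_iff₀ (mul_pos (by positivity) (hden.trans_le hsS))]
  set W := 1 + 0.01 * t ^ 3 + 0.0039 * t ^ 6 with hW
  have hW0 : 0 ≤ W := by positivity
  calc _ ≤ _ := hD
    _ ≤ 4 / 9 * t ^ 6 * (sTp (t ^ 2) * lTp (t ^ 2) * W) := by gcongr
    _ = 4 / (9 * √3) * (3 * t ^ 2 * W) * ((t ^ 2 * sTp (t ^ 2)) * (t ^ 2 / √3 * lTp (t ^ 2))) := by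
      have : (4:ℝ) / (9 * √3) * (3 * t ^ 2 * W) * ((t ^ 2 * sTp (t ^ 2)) * (t ^ 2 / √3 * lTp (t ^ 2))) = 12 / (9 * √3 ^ 2) * t ^ 6 * (sTp (t ^ 2) * lTp (t ^ 2) * W) := by
        field_simp
        ring
      rw [this, h33]; ring
    _ ≤ 4 / (9 * √3) * (3 * t ^ 2 * W) * (sin t ^ 2 * (sin t * √((t / sin t)^2 - 1))) := by
      apply mul_le_mul_of_nonneg_left _ (by positivity)
      exact mul_le_mul hsT hsS hden.le (by positivity)
    _ = _ := by rw [hW]; ring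

lemma spF_le (t : ℝ) (h0 : 0 ≤ t) (h1 : t ≤ 2.37) :
    spF t ≤ 4 / (9 * √3) * (t ^ 3 + 0.005 * t ^ 6 + 0.0013 * t ^ 9) := by
  have hpi : (2.37:ℝ) < π := by have := Real.pi_gt_d2; norm_num at h1 ⊢; linarith
  have hm : MonotoneOn (fun t => 4 / (9 * √3) * (t ^ 3 + 0.005 * t ^ 6 + 0.0013 * t ^ 9) - spF t) (Set.Icc 0 2.37) := by
    have hder : ∀ x ∈ Set.Ioo (0:ℝ) 2.37, HasDerivAt (fun t => 4 / (9 * √3) * (t ^ 3 + 0.005 * t ^ 6 + 0.0013 * t ^ 9) - spF t)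
       (4 / (9 * √3) * (3 * x ^ 2 + 0.03 * x ^ 5 + 0.0117 * x ^ 8) - (x - sin x * cos x)^2 / (sin x ^3 * √((x / sin x)^2 - 1))) x := by
      intro x hx
      refine HasDerivAt.sub ?_ (spF_deriv x ⟨hx.1, hx.2.trans hpi⟩)
      have h := ((((hasDerivAt_pow 3 x).add ((hasDerivAt_pow 6 x).const_mul (0.005:ℝ))).add ((hasDerivAt_pow 9 x).const_mul (0.0013:ℝ)))).const_mul (4 / (9 * √3))
      refine h.congr_deriv ?_
      push_cast
      norm_num
      ring
    apply monotoneOn_of_deriv_nonneg (convex_Icc _ _)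
    · apply ContinuousOn.sub (by fun_prop)
      exact spF_cont.mono fun x hx => ⟨hx.1, lt_of_le_of_lt hx.2 hpi⟩
    · intro x hx
      rw [interior_Icc] at hx
      exact (hder x hx).differentiableAt.differentiableWithinAt
    · intro x hx
      rw [interior_Icc] at hx
      rw [(hder x hx).deriv]
      linarith [spF_deriv_le x hx.1 hx.2]
  have := hm ⟨le_rfl, by norm_num⟩ ⟨h0, h1⟩ h0
  simp only [spF_zero] at this
  norm_num at this ⊢
  linarith

lemma int_lower (b : ℝ) (hb : 0 < b) :
    IntegrableOn (fun t : ℝ => exp (-(b * t ^ 3)) * (1 - b * (0.005 * t ^ 6 + 0.0013 * t ^ 9))) (Set.Ioi 0) ∧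
    ∫ t in Set.Ioi (0:ℝ), exp (-(b * t ^ 3)) * (1 - b * (0.005 * t ^ 6 + 0.0013 * t ^ 9)) =
     1 / 3 * b ^ (-(1:ℝ) / 3) * Gamma (1/3) * (1 - 4/9 * 0.005 / b - 28/27 * 0.0013 / b ^ 2) := by
  have hI : ∀ n : ℕ, IntegrableOn (fun t : ℝ => t ^ n * exp (-(b * t ^ 3))) (Set.Ioi 0) ∧ ∫ t in Set.Ioi (0:ℝ), t ^ n * exp (-(b * t ^ 3)) = b ^ (-((n:ℝ) + 1) / 3) * (1 / 3) * Gamma (((n:ℝ) + 1) / 3) := by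
    intro n
    have e : ∀ t : ℝ, t ^ (n:ℝ) * exp (-b * t ^ (3:ℝ)) = t ^ n * exp (-(b * t ^ 3)) := by
      intro t
      rw [Real.rpow_natCast, show (3:ℝ) = ((3:ℕ):ℝ) by norm_num, Real.rpow_natCast]
      ring_nf
    have hn : (-1:ℝ) < n := by have : (0:ℝ) ≤ n := by positivity
                               linarith
    constructor
    · have := integrableOn_rpow_mul_exp_neg_mul_rpow (p := 3) (s := n) (b := b) hn (by norm_num) hb
      simpa only [e] using this
    · have := integral_rpow_mul_exp_neg_mul_rpow (p := 3) (q := n) (b := b) (by norm_num) hn hb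
      simpa only [e] using this
  obtain ⟨i0, j0⟩ := hI 0
  obtain ⟨i6, j6⟩ := hI 6
  obtain ⟨i9, j9⟩ := hI 9
  have e : (fun t : ℝ => exp (-(b * t ^ 3)) * (1 - b * (0.005 * t ^ 6 + 0.0013 * t ^ 9))) =
    fun t => t ^ 0 * exp (-(b * t ^ 3)) - (b * 0.005 * (t ^ 6 * exp (-(b * t ^ 3))) + b * 0.0013 * (t ^ 9 * exp (-(b * t ^ 3)))) := by
    funext t; ring
  have g1 : Gamma (7/3) = 4/9 * Gamma (1/3) := by
    rw [show (7:ℝ)/3 = 4/3 + 1 by norm_num, Real.Gamma_add_one (by norm_num), show (4:ℝ)/3 = 1/3 + 1 by norm_num, Real.Gamma_add_one (by norm_num)]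
    ring
  have g2 : Gamma (10/3) = 28/27 * Gamma (1/3) := by
    rw [show (10:ℝ)/3 = 7/3 + 1 by norm_num, Real.Gamma_add_one (by norm_num), g1]
    ring
  have b1 : b ^ (-(7:ℝ)/3) = b ^ (-(1:ℝ)/3) / b ^ 2 := by
    rw [← Real.rpow_natCast b 2, ← Real.rpow_sub hb]; norm_num
  have b2 : b ^ (-(10:ℝ)/3) = b ^ (-(1:ℝ)/3) / b ^ 3 := by
    rw [← Real.rpow_natCast b 3, ← Real.rpow_sub hb]; norm_num
  rw [e]
  have i69 : Integrable (fun t : ℝ => b * 0.005 * (t ^ 6 * exp (-(b * t ^ 3))) + b * 0.0013 * (t ^ 9 * exp (-(b * t ^ 3)))) (volume.restrict (Set.Ioi 0)) := (i6.const_mul (b * 0.005)).add (i9.const_mul (b * 0.0013))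
  refine ⟨i0.sub i69, ?_⟩
  rw [integral_sub i0 i69, integral_add (i6.const_mul (b * 0.005)) (i9.const_mul (b * 0.0013)), integral_const_mul, integral_const_mul, j0, j6, j9]
  push_cast
  rw [show -((6:ℝ)+1)/3 = -7/3 by norm_num, show -((9:ℝ)+1)/3 = -10/3 by norm_num, show -((0:ℝ)+1)/3 = -1/3 by norm_num, show ((6:ℝ)+1)/3 = 7/3 by norm_num, show ((9:ℝ)+1)/3 = 10/3 by norm_num, show ((0:ℝ)+1)/3 = 1/3 by norm_num, g1, g2, b1, b2]
  field_simp
  ring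

lemma big_int (v : ℝ) (hv : 1 ≤ v) :
    1 / 3 * (v * (4 / (9 * √3))) ^ (-(1:ℝ) / 3) * Gamma (1/3) * (1 - 0.02914 / v) ≤ π * ((v/2)^v * bPhi v (v^2/4)) := by
  have hv0 : 0 < v := by linarith
  have hpi : (2.37:ℝ) < π := by have := Real.pi_gt_d2; norm_num; linarith
  have h3 : (0:ℝ) < √3 := by positivity
  have h33 : √3 ^ 2 = (3:ℝ) := Real.sq_sqrt (by norm_num)
  have h3u : √3 < 1.7321 := by rw [Real.sqrt_lt' (by norm_num)]; norm_num
  refine le_trans ?_ (sp_main v hv0 2.37 (by norm_num) hpi)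
  set b := v * (4 / (9 * √3)) with hbd
  have hb : 0 < b := by positivity
  have hb1 : 0.2565 ≤ b := by
    have : 0.2565 ≤ 4 / (9 * √3) := by
      rw [le_div_iff₀ (by positivity)]; norm_num at h3u ⊢; linarith
    have h4 : 4 / (9 * √3) ≤ v * (4 / (9 * √3)) := le_mul_of_one_le_left (by positivity) hv
    linarith
  obtain ⟨hi, he⟩ := int_lower b hb
  set f : ℝ → ℝ := fun t => exp (-(b * t ^ 3)) * (1 - b * (0.005 * t ^ 6 + 0.0013 * t ^ 9)) with hf
  have s1 : ∫ t in Set.Ioi (0:ℝ), f t ≤ ∫ t in (0:ℝ)..2.37, f t := by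
    rw [intervalIntegral.integral_of_le (by norm_num)]
    have hu : Set.Ioi (0:ℝ) = Set.Ioc 0 2.37 ∪ Set.Ioi 2.37 := (Set.Ioc_union_Ioi_eq_Ioi (by norm_num)).symm
    rw [hu, setIntegral_union (Set.Ioc_disjoint_Ioi le_rfl) measurableSet_Ioi (hi.mono_set Set.Ioc_subset_Ioi_self) (hi.mono_set (Set.Ioi_subset_Ioi (by norm_num)))]
    have : ∫ t in Set.Ioi (2.37:ℝ), f t ≤ 0 := by
      apply setIntegral_nonpos measurableSet_Ioi
      intro t ht
      have ht : (2.37:ℝ) < t := ht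
      have ht0 : 0 < t := by norm_num at ht; linarith
      apply mul_nonpos_of_nonneg_of_nonpos (exp_pos _).le
      have p6 : (2.37:ℝ)^6 ≤ t ^ 6 := by gcongr
      have p9 : (2.37:ℝ)^9 ≤ t ^ 9 := by gcongr
      have : (3.9:ℝ) ≤ 0.005 * t ^ 6 + 0.0013 * t ^ 9 := by norm_num at p6 p9 ⊢; linarith
      have := mul_le_mul hb1 this (by norm_num) hb.le
      norm_num at this ⊢
      linarith
    linarith
  have s2 : ∫ t in (0:ℝ)..2.37, f t ≤ ∫ x in (0:ℝ)..2.37, Real.exp (-(v * spF x)) := by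
    have hc : ContinuousOn (fun x => Real.exp (-(v * spF x))) (Set.Icc 0 2.37) := by
      apply ContinuousOn.rexp
      exact (continuousOn_const.mul (spF_cont.mono fun x hx => ⟨hx.1, lt_of_le_of_lt hx.2 hpi⟩)).neg
    apply intervalIntegral.integral_mono_on (by norm_num)
    · apply Continuous.intervalIntegrable; rw [hf]; fun_prop
    · apply ContinuousOn.intervalIntegrable; rw [Set.uIcc_of_le (by norm_num)]; exact hc
    · intro t ht
      have h1 := mul_le_mul_of_nonneg_left (spF_le t ht.1 ht.2) hv0.le
      have h2 : v * spF t ≤ b * t ^ 3 + b * (0.005 * t ^ 6 + 0.0013 * t ^ 9) := by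
        refine h1.trans (le_of_eq ?_)
        rw [hbd]; ring
      calc f t ≤ exp (-(b * t ^ 3)) * exp (-(b * (0.005 * t ^ 6 + 0.0013 * t ^ 9))) := by
            rw [hf]
            apply mul_le_mul_of_nonneg_left _ (exp_pos _).le
            exact Real.one_sub_le_exp_neg _
        _ ≤ _ := by
            rw [← Real.exp_add, Real.exp_le_exp]
            linarith
  refine le_trans ?_ (s1.trans s2)
  rw [he]
  have hG : 0 < Gamma (1/3) := Real.Gamma_pos_of_pos (by norm_num)
  apply mul_le_mul_of_nonneg_left _ (by positivity)
  have e1 : 4/9 * 0.005 / b = 0.005 * √3 / v := by rw [hbd]; field_simp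
  have e2 : 28/27 * 0.0013 / b ^ 2 = 28/27 * 0.0013 * 243/16 / v ^ 2 := by
    rw [hbd, mul_pow, div_pow, mul_pow, h33]; field_simp; ring
  rw [e1, e2]
  have k1 : 0.005 * √3 / v ≤ 0.0086605 / v := by
    apply div_le_div_of_nonneg_right _ hv0.le; norm_num at h3u ⊢; linarith
  have k2 : 28/27 * 0.0013 * 243/16 / v ^ 2 ≤ 0.020475 / v := by
    rw [div_le_div_iff₀ (by positivity) hv0]; norm_num; nlinarith
  have k3 : 0.0086605 / v + 0.020475 / v ≤ 0.02914 / v := by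
    rw [← add_div]; apply div_le_div_of_nonneg_right _ hv0.le; norm_num
  linarith

lemma bJ_big (v : ℝ) (hv : 1 ≤ v) : 0 < (v/2)^v * bPhi v (v^2/4) ∧
    Gamma (1/3) ^ 3 / (4 * √3) ≤ π ^ 3 * ((v/2)^v * bPhi v (v^2/4)) ^ 3 * (v + 0.095) := by
  have h := big_int v hv
  have hv0 : 0 < v := by linarith
  have hG : 0 < Gamma (1/3) := Real.Gamma_pos_of_pos (by norm_num)
  have h3 : (0:ℝ) < √3 := by positivity
  set J := (v/2)^v * bPhi v (v^2/4)
  set b := v * (4 / (9 * √3)) with hbd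
  have hb : 0 < b := by positivity
  have hk : 0 < 1 - 0.02914 / v := by
    rw [sub_pos, div_lt_one hv0]; norm_num; linarith
  have hJ : 0 < π * J := lt_of_lt_of_le (by positivity) h
  refine ⟨(pos_iff_pos_of_mul_pos hJ).1 Real.pi_pos, ?_⟩
  have hc := pow_le_pow_left₀ (by positivity) h 3
  have hbc : (b ^ (-(1:ℝ) / 3)) ^ 3 = 1 / b := by
    rw [← Real.rpow_natCast, ← Real.rpow_mul hb.le, one_div, ← Real.rpow_neg_one]; norm_num
  have e : (1 / 3 * b ^ (-(1:ℝ) / 3) * Gamma (1/3) * (1 - 0.02914 / v)) ^ 3 = Gamma (1/3) ^ 3 / (4 * √3) * ((1 - 0.02914 / v) ^ 3 / v) * (√3 ^ 2 / 3) := by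
    rw [mul_pow, mul_pow, mul_pow, hbc, hbd]; field_simp; ring
  rw [e, Real.sq_sqrt (by norm_num)] at hc
  have hfin : 1 ≤ (1 - 0.02914 / v) ^ 3 / v * (v + 0.095) := by
    have : (1 - 0.02914 / v) ^ 3 / v * (v + 0.095) = (v - 0.02914) ^ 3 * (v + 0.095) / v ^ 4 := by
      field_simp
    rw [this, le_div_iff₀ (by positivity)]
    norm_num
    obtain ⟨u, rfl⟩ : ∃ u, v = 1 + u := ⟨v - 1, by ring⟩
    have hu : 0 ≤ u := by linarith
    have : 0 ≤ u ^ 2 := by positivity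
    have : 0 ≤ u ^ 3 := by positivity
    nlinarith
  have hpos : 0 < Gamma (1/3) ^ 3 / (4 * √3) := by positivity
  calc Gamma (1/3) ^ 3 / (4 * √3) ≤ Gamma (1/3) ^ 3 / (4 * √3) * ((1 - 0.02914 / v) ^ 3 / v * (v + 0.095)) := le_mul_of_one_le_right hpos.le hfin
    _ = Gamma (1/3) ^ 3 / (4 * √3) * ((1 - 0.02914 / v) ^ 3 / v) * (3 / 3) * (v + 0.095) := by ring
    _ ≤ (π * J) ^ 3 * (v + 0.095) := by apply mul_le_mul_of_nonneg_right hc; norm_num; linarith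
    _ = _ := by ring

lemma besselJ_eq (v y : ℝ) (hy : 0 < y) : besselJ v y = (y / 2) ^ v * bPhi v (y ^ 2 / 4) := by
  unfold besselJ bPhi
  rw [← tsum_mul_left]
  congr 1
  funext k
  have : (y / 2) ^ (2 * (k : ℝ) + v) = (y ^ 2 / 4) ^ k * (y / 2) ^ v := by
    rw [Real.rpow_add (by positivity), show 2 * (k:ℝ) = ((2 * k : ℕ) : ℝ) by push_cast; ring, Real.rpow_natCast, pow_mul]
    congr 2
    ring
  rw [this]
  ring

lemma bJ_lower (v : ℝ) (hv : 0 < v) : 0 < (v/2)^v * bPhi v (v^2/4) ∧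
    Gamma (1/3) ^ 3 / (4 * √3) ≤ π ^ 3 * ((v/2)^v * bPhi v (v^2/4)) ^ 3 * (v + 0.095) := by
  rcases le_total 1 v with h | h
  · exact bJ_big v h
  · obtain ⟨h1, h2⟩ := bJ_small v hv h
    refine ⟨h1, ?_⟩
    have h3 : 1.73205 < √3 := Real.lt_sqrt_of_sq_lt (by norm_num)
    have hp : (3.14159:ℝ) ^ 3 ≤ π ^ 3 := by
      have := Real.pi_gt_d6
      gcongr
      norm_num at this ⊢
      linarith
    calc Gamma (1/3) ^ 3 / (4 * √3) ≤ 19.232 / (4 * 1.73205) := by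
          have := gam_third
          have hG : 0 < Gamma (1/3) := Real.Gamma_pos_of_pos (by norm_num)
          gcongr
      _ ≤ 3.14159 ^ 3 * 0.08953 := by norm_num
      _ ≤ π ^ 3 * (((v/2)^v * bPhi v (v^2/4)) ^ 3 * (v + 0.095)) := by
          apply mul_le_mul hp h2 (by norm_num) (by positivity)
      _ = _ := by ring

lemma elbert_lower (v : ℝ) (hv : 0 < v) :
    Real.Gamma (1 / 3) /
        (2 ^ ((2 : ℝ) / 3) * 3 ^ ((1 : ℝ) / 6) * Real.pi * (v + 0.095) ^ ((1 : ℝ) / 3)) ≤ (v/2)^v * bPhi v (v^2/4) := by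
  obtain ⟨h1, h2⟩ := bJ_lower v hv
  set J := (v/2)^v * bPhi v (v^2/4)
  have hw : 0 < v + 0.095 := by positivity
  refine le_of_pow_le_pow_left₀ (n := 3) (by norm_num) h1.le ?_
  rw [div_pow, mul_pow, mul_pow, mul_pow]
  have e1 : ((2:ℝ) ^ ((2 : ℝ) / 3)) ^ 3 = 4 := by
    rw [← Real.rpow_natCast, ← Real.rpow_mul (by norm_num)]; norm_num
  have e2 : ((3:ℝ) ^ ((1 : ℝ) / 6)) ^ 3 = √3 := by
    rw [← Real.rpow_natCast, ← Real.rpow_mul (by norm_num), Real.sqrt_eq_rpow]; norm_num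
  have e3 : ((v + 0.095) ^ ((1 : ℝ) / 3)) ^ 3 = v + 0.095 := by
    rw [← Real.rpow_natCast, ← Real.rpow_mul hw.le]; norm_num
  rw [e1, e2, e3]
  rw [div_le_iff₀ (by positivity)] at h2 ⊢
  linarith

/-- For every `ν > 0` and `0 < x ≤ 1`,
`J_ν(νx) ≥ (Γ(1/3)/(2^{2/3} 3^{1/6} π (ν+0.095)^{1/3}))·x^ν·exp(ν²(1-x²)/(4ν+4))`. -/
theorem stmt_19 (v : ℝ) (hv : 0 < v) (x : ℝ) (hx0 : 0 < x) (hx1 : x ≤ 1) :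
    Real.Gamma (1 / 3) /
        (2 ^ ((2 : ℝ) / 3) * 3 ^ ((1 : ℝ) / 6) * Real.pi * (v + 0.095) ^ ((1 : ℝ) / 3)) *
      x ^ v * Real.exp (v ^ 2 * (1 - x ^ 2) / (4 * v + 4)) ≤ besselJ v (v * x) := by
  have hE := elbert_lower v hv
  have hP := bPhi_paris v hv ((v * x) ^ 2 / 4) (by positivity) (by
    have : (v * x) ^ 2 ≤ v ^ 2 := by
      apply pow_le_pow_left₀ (by positivity)
      exact mul_le_of_le_one_right hv.le hx1
    linarith)
  rw [besselJ_eq v (v * x) (by positivity)]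
  have e1 : (v * x / 2) ^ v = x ^ v * (v / 2) ^ v := by
    rw [← Real.mul_rpow hx0.le (by positivity)]; congr 1; ring
  have e2 : (v ^ 2 / 4 - (v * x) ^ 2 / 4) / (v + 1) = v ^ 2 * (1 - x ^ 2) / (4 * v + 4) := by
    field_simp
  rw [e2] at hP
  rw [e1]
  calc _ ≤ ((v/2)^v * bPhi v (v^2/4)) * x ^ v * Real.exp (v ^ 2 * (1 - x ^ 2) / (4 * v + 4)) := by
        gcongr
    _ = x ^ v * (v / 2) ^ v * (bPhi v (v^2/4) * Real.exp (v ^ 2 * (1 - x ^ 2) / (4 * v + 4))) := by ring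
    _ ≤ _ := by gcongr

end
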